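/- arXiv:2007.00910 — 3 statements merged into one kernel-verified Lean document; each statement's English description precedes it below -/
import Mathlib

section
/- Let m ≥ 1 be an integer and λ ∈ ℝ. There exists a nonzero smooth Γ^m-periodic function φ: ℝ^{3m} → ℂ with −Δφ = λφ if and only if there exist a subset 𝒥 ⊆ {1,…,m}, natural numbers n_j ∈ ℕ and nonzero integers α_j ∈ ℤ∖{0} for j ∈ 𝒥, and integers k_i, ℓ_i ∈ ℤ for i ∉ 𝒥, such that λ = ∑_{j∈𝒥}(2n_j+1)|α_j| + 2π∑_{i∉𝒥}(k_i² + ℓ_i²). (The description of the spectrum of the sub-Laplacian Δ on the product 𝐇^m derived in Section 5.2 of the paper.) -/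
/-!
Why the spectrum has this form. The fields `X_j`, `Y_j`, `∂_{z_j}` commute with the left action of
`Γ^m`, so they act on the space `HS m` of smooth `Γ^m`-periodic functions; the only nontrivial
commutators there are `[X_j, Y_j] = -∂_{z_j}`.

Every eigenvalue is of the stated form. Translation in `z_j` is a circle action commuting with
everything, so Fourier projection (`exists_projection`, `exists_Z_mode`) replaces an eigenfunction
by one with `∂_{z_j} φ = i α_j φ`, `α_j ∈ ℤ`, for all `j`. If `α_j = 0`, the function is periodic in
`x_j` and `y_j` in the ordinary sense, and further projections (`exists_X_mode`, `exists_Y_mode`)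
make it an eigenfunction of `X_j` and `Y_j` with eigenvalues `i √(2π) k_j` and `i √(2π) l_j`. If
`α_j ≠ 0`, the ladder operator `X_j + i sgn(α_j) Y_j` lowers the eigenvalue of `-Δ` by `2|α_j|`.
As `-Δ` has no negative eigenvalue, which follows from the maximum principle
(`eigenvalue_nonneg`), lowering ends at a nonzero function annihilated by all these operators, whose
eigenvalue is explicit because `(X_j - i sgn(α_j) Y_j)(X_j + i sgn(α_j) Y_j) = Δ_j + |α_j|` there
(`eigenvalue_form`, `spectrum_subset`).

Every such number is an eigenvalue. Since only `|α_j|` enters, take `a_j = |α_j| > 0`. With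
`r = √(2π)`, the function `exp(i a z - a x² / 2) θ((a / r) (y - i x), i a)`, `θ` being Jacobi's
two-variable theta function, is `Γ`-periodic by the quasi-periodicity of `θ` and is annihilated by
`X + iY` because `θ` is holomorphic (`isFactor_theta`). Products of such functions and of plane
waves over the factors are the ground states (`exists_base`), and the raising operators
`X_j - iY_j` produce the remaining eigenvalues (`exists_raised`, `subset_spectrum`).
-/

open MeasureTheory Filter Real Topology

noncomputable section

abbrev Pt (m : ℕ) : Type := (Fin m → ℝ) × (Fin m → ℝ) × (Fin m → ℝ)

def eX (m : ℕ) (j : Fin m) : Pt m := (Pi.single j 1, 0, 0)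
def eY (m : ℕ) (j : Fin m) : Pt m := (0, Pi.single j 1, 0)
def eZ (m : ℕ) (j : Fin m) : Pt m := (0, 0, Pi.single j 1)

/-- The vector field X_j = ∂_{x_j}. -/
def Xop {m : ℕ} (j : Fin m) (φ : Pt m → ℂ) : Pt m → ℂ := fun q => fderiv ℝ φ q (eX m j)

/-- The vector field ∂_{z_j}. -/
def Zop {m : ℕ} (j : Fin m) (φ : Pt m → ℂ) : Pt m → ℂ := fun q => fderiv ℝ φ q (eZ m j)

/-- The vector field Y_j = ∂_{y_j} - x_j ∂_{z_j}. -/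
def Yop {m : ℕ} (j : Fin m) (φ : Pt m → ℂ) : Pt m → ℂ :=
  fun q => fderiv ℝ φ q (eY m j) - (q.1 j : ℂ) * fderiv ℝ φ q (eZ m j)

/-- Δ_j = X_j² + Y_j². -/
def DeltaJ {m : ℕ} (j : Fin m) (φ : Pt m → ℂ) : Pt m → ℂ :=
  fun q => Xop j (Xop j φ) q + Yop j (Yop j φ) q

/-- Δ = Δ_1 + ⋯ + Δ_m. -/
def Delta {m : ℕ} (φ : Pt m → ℂ) : Pt m → ℂ := fun q => ∑ j, DeltaJ j φ q

/-- Left translation by ((a_j, b_j, c_j))_j on each Heisenberg factor. -/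
def heisAct {m : ℕ} (a b c : Fin m → ℝ) (q : Pt m) : Pt m :=
  (fun j => a j + q.1 j, fun j => b j + q.2.1 j, fun j => c j + q.2.2 j - a j * q.2.1 j)

def InGamma {m : ℕ} (a b c : Fin m → ℝ) : Prop :=
  (∀ j, ∃ k : ℤ, a j = k * Real.sqrt (2 * π)) ∧
  (∀ j, ∃ k : ℤ, b j = k * Real.sqrt (2 * π)) ∧
  (∀ j, ∃ k : ℤ, c j = k * (2 * π))

def GPeriodic {m : ℕ} {α : Type} (φ : Pt m → α) : Prop :=
  ∀ a b c : Fin m → ℝ, InGamma a b c → ∀ q, φ (heisAct a b c q) = φ q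

def Dset (m : ℕ) : Set (Pt m) :=
  {q | ∀ j, q.1 j ∈ Set.Ico 0 (Real.sqrt (2 * π)) ∧
        q.2.1 j ∈ Set.Ico 0 (Real.sqrt (2 * π)) ∧
        q.2.2 j ∈ Set.Ico 0 (2 * π)}

structure EigenSeq (m : ℕ) (φ : ℕ → Pt m → ℂ) (lam : ℕ → ℝ) : Prop where
  smooth : ∀ k, ContDiff ℝ (⊤ : ℕ∞) (φ k)
  periodic : ∀ k, GPeriodic (φ k)
  normalized : ∀ k, ∫ q in Dset m, ‖φ k q‖ ^ 2 = 1
  eigen : ∀ k q, -Delta (φ k) q = (lam k : ℂ) * φ k q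

/-- The translation flow T_t^v : adds t v_j to each z_j coordinate. -/
def Ttrans {m : ℕ} (v : Fin m → ℝ) (t : ℝ) (q : Pt m) : Pt m :=
  (q.1, q.2.1, fun j => q.2.2 j + t * v j)

def TInvariant {m : ℕ} (v : Fin m → ℝ) (η : Measure (Pt m)) : Prop :=
  ∀ t : ℝ, ∀ a : Pt m → ℝ, Continuous a → GPeriodic a →
    ∫ q, a (Ttrans v t q) ∂η = ∫ q, a q ∂η

def sphereL1 (m : ℕ) : Set (Fin m → ℝ) := {v | ∑ j, |v j| = 1}

/-! ### Fourier projection along a line field -/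

section FourierProjection

/-- The (unnormalised) Fourier coefficient of `φ` along the line field `v`, of frequency `κ`
and over one period `L`. -/
def fproj {m : ℕ} (L κ : ℝ) (v : Pt m) (φ : Pt m → ℂ) : Pt m → ℂ :=
  fun q => ∫ t in (0 : ℝ)..L, Complex.exp (-(κ * t : ℝ) * Complex.I) * φ (q + t • v)

variable {m : ℕ} {L κ : ℝ} {v : Pt m} {φ : Pt m → ℂ}

lemma smooth_D (hφ : ContDiff ℝ (⊤ : ℕ∞) φ) (w : Pt m) :
    ContDiff ℝ (⊤ : ℕ∞) (fun q => fderiv ℝ φ q w) :=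
  (hφ.fderiv_right (m := (⊤ : ℕ∞)) (by simp)).clm_apply contDiff_const

lemma fproj_hasFDerivAt (hφ : ContDiff ℝ (⊤ : ℕ∞) φ) (q : Pt m) :
    HasFDerivAt (fproj L κ v φ)
      (∫ t in (0 : ℝ)..L, Complex.exp (-(κ * t : ℝ) * Complex.I) • fderiv ℝ φ (q + t • v)) q := by
  have hcφ : Continuous φ := hφ.continuous
  have hcd : Continuous (fderiv ℝ φ) := hφ.continuous_fderiv (by simp)
  have hc2 : Continuous (fun p : Pt m × ℝ =>
      Complex.exp (-(κ * p.2 : ℝ) * Complex.I) • fderiv ℝ φ (p.1 + p.2 • v)) := by fun_prop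
  obtain ⟨C, hC⟩ := ((isCompact_closedBall q 1).prod
    (isCompact_uIcc (a := (0:ℝ)) (b := L))).exists_bound_of_continuousOn hc2.continuousOn
  refine intervalIntegral.hasFDerivAt_integral_of_dominated_of_fderiv_le (𝕜 := ℝ)
    (F := fun q t => Complex.exp (-(κ * t : ℝ) * Complex.I) * φ (q + t • v))
    (F' := fun q t => Complex.exp (-(κ * t : ℝ) * Complex.I) • fderiv ℝ φ (q + t • v))
    (bound := fun _ => C) (Metric.closedBall_mem_nhds q one_pos) ?_ ?_ ?_ ?_ ?_ ?_
  · refine Eventually.of_forall fun x => Continuous.aestronglyMeasurable (by fun_prop)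
  · exact Continuous.intervalIntegrable (by fun_prop) _ _
  · exact Continuous.aestronglyMeasurable (by fun_prop)
  · refine Eventually.of_forall fun t ht x hx => ?_
    exact hC (x, t) ⟨hx, Set.uIoc_subset_uIcc ht⟩
  · exact intervalIntegrable_const
  · refine Eventually.of_forall fun t ht x hx => ?_
    have h1 : HasFDerivAt φ (fderiv ℝ φ (x + t • v)) (x + t • v) :=
      (hφ.differentiable (by simp) _).hasFDerivAt
    have h2 : HasFDerivAt (fun x => φ (x + t • v)) (fderiv ℝ φ (x + t • v)) x :=
      (hasFDerivAt_comp_add_right (t • v)).2 h1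
    exact h2.const_smul (Complex.exp (-(κ * t : ℝ) * Complex.I))

/-- Constant-coefficient derivatives commute with the projection. -/
lemma fproj_fderiv (hφ : ContDiff ℝ (⊤ : ℕ∞) φ) (q w : Pt m) :
    fderiv ℝ (fproj L κ v φ) q w = fproj L κ v (fun q => fderiv ℝ φ q w) q := by
  have hcd : Continuous (fderiv ℝ φ) := hφ.continuous_fderiv (by simp)
  rw [(fproj_hasFDerivAt hφ q).fderiv, ContinuousLinearMap.intervalIntegral_apply]
  · rfl
  · exact Continuous.intervalIntegrable (by fun_prop) _ _

lemma fproj_smooth (hφ : ContDiff ℝ (⊤ : ℕ∞) φ) : ContDiff ℝ (⊤ : ℕ∞) (fproj L κ v φ) := by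
  refine contDiff_infty.2 fun n => ?_
  induction n generalizing φ with
  | zero =>
    have : Continuous (fproj L κ v φ) :=
      continuous_iff_continuousAt.2 fun q => (fproj_hasFDerivAt hφ q).continuousAt
    exact_mod_cast contDiff_zero.2 this
  | succ n ih =>
    push_cast
    rw [contDiff_succ_iff_fderiv_apply]
    refine ⟨fun q => (fproj_hasFDerivAt hφ q).differentiableAt, by simp, fun w => ?_⟩
    have : (fun q => fderiv ℝ (fproj L κ v φ) q w)
        = fproj L κ v (fun q => fderiv ℝ φ q w) := funext fun q => fproj_fderiv hφ q w
    rw [this]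
    exact ih (smooth_D hφ w)

lemma fproj_const_mul (c : ℂ) (φ : Pt m → ℂ) :
    fproj L κ v (fun q => c * φ q) = fun q => c * fproj L κ v φ q := by
  funext q
  simp only [fproj]
  rw [← intervalIntegral.integral_const_mul]
  exact intervalIntegral.integral_congr fun t _ => by ring

lemma fproj_add {ψ : Pt m → ℂ} (hφ : Continuous φ) (hψ : Continuous ψ) :
    fproj L κ v (fun q => φ q + ψ q) = fun q => fproj L κ v φ q + fproj L κ v ψ q := by
  funext q
  simp only [fproj]
  rw [← intervalIntegral.integral_add]
  · exact intervalIntegral.integral_congr fun t _ => by ring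
  all_goals exact Continuous.intervalIntegrable (by fun_prop) _ _

lemma fproj_sum {ι : Type*} (s : Finset ι) (f : ι → Pt m → ℂ) (hf : ∀ i ∈ s, Continuous (f i)) :
    fproj L κ v (fun q => ∑ i ∈ s, f i q) = fun q => ∑ i ∈ s, fproj L κ v (f i) q := by
  funext q
  simp only [fproj]
  rw [← intervalIntegral.integral_finsetSum]
  · exact intervalIntegral.integral_congr fun t _ => by simp [Finset.mul_sum]
  · intro i hi
    have := hf i hi
    exact Continuous.intervalIntegrable (by fun_prop) _ _

/-- Translating along `v` multiplies the projection by a character, as the integrand is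
`L`-periodic. -/
lemma fproj_shift (hκ : ∃ k : ℤ, κ * L = k * (2 * π)) (hper : ∀ q, φ (q + L • v) = φ q)
    (q : Pt m) (s : ℝ) :
    fproj L κ v φ (q + s • v) = Complex.exp ((κ * s : ℝ) * Complex.I) * fproj L κ v φ q := by
  obtain ⟨k, hk⟩ := hκ
  set f : ℝ → ℂ := fun t => Complex.exp (-(κ * t : ℝ) * Complex.I) * φ (q + t • v) with hf
  have hp : Function.Periodic f L := by
    intro t
    simp only [hf]
    congr 1
    · have : -((κ * (t + L) : ℝ) : ℂ) * Complex.I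
          = -((κ * t : ℝ) : ℂ) * Complex.I + ((-k : ℤ) : ℂ) * (2 * π * Complex.I) := by
        rw [mul_add, hk]; push_cast; ring
      rw [this, Complex.exp_add, Complex.exp_int_mul_two_pi_mul_I, mul_one]
    · rw [← hper (q + t • v)]; congr 1; module
  have h1 : fproj L κ v φ (q + s • v)
      = Complex.exp ((κ * s : ℝ) * Complex.I) * ∫ t in (0:ℝ)..L, f (t + s) := by
    simp only [fproj]
    rw [← intervalIntegral.integral_const_mul]
    refine intervalIntegral.integral_congr fun t _ => ?_
    simp only [hf]
    rw [← mul_assoc, ← Complex.exp_add]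
    congr 1
    · congr 1; push_cast; ring
    · congr 1; module
  rw [h1, intervalIntegral.integral_comp_add_right]
  congr 1
  have := hp.intervalIntegral_add_eq s 0
  rw [zero_add] at this
  rw [zero_add, add_comm L s, this]
  rfl

lemma D_eq_lineDeriv (hφ : ContDiff ℝ (⊤ : ℕ∞) φ) (q w : Pt m) :
    fderiv ℝ φ q w = lineDeriv ℝ φ q w :=
  ((hφ.differentiable (by simp) q).lineDeriv_eq_fderiv).symm

/-- A function scaling by a character along `v` is an eigenfunction of the derivative along `v`. -/
lemma D_of_shift (hφ : ContDiff ℝ (⊤ : ℕ∞) φ) (q w : Pt m) (c : ℂ)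
    (h : ∀ s : ℝ, φ (q + s • w) = Complex.exp (s * c) * φ q) :
    fderiv ℝ φ q w = c * φ q := by
  rw [D_eq_lineDeriv hφ, lineDeriv]
  simp_rw [h]
  have h1 : HasDerivAt (fun s : ℝ => Complex.exp (s * c) * φ q)
      (Complex.exp ((0 : ℝ) * c) * (1 * c) * φ q) 0 :=
    (((Complex.ofRealCLM.hasDerivAt (x := (0:ℝ))).mul_const c).cexp).mul_const (φ q)
  rw [h1.deriv]; simp

lemma fproj_D (hφ : ContDiff ℝ (⊤ : ℕ∞) φ) (hκ : ∃ k : ℤ, κ * L = k * (2 * π))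
    (hper : ∀ q, φ (q + L • v) = φ q) (q : Pt m) :
    fderiv ℝ (fproj L κ v φ) q v = Complex.I * κ * fproj L κ v φ q := by
  refine D_of_shift (fproj_smooth hφ) q v _ fun s => ?_
  rw [fproj_shift hκ hper]
  congr 2; push_cast; ring

/-- Some Fourier coefficient of a nonzero continuous function is nonzero. -/
lemma exists_fproj_ne_zero (hφ : Continuous φ) (hL : 0 < L) (hper : ∀ q, φ (q + L • v) = φ q)
    (hne : φ ≠ 0) : ∃ k : ℤ, fproj L (k * (2 * π) / L) v φ ≠ 0 := by
  by_contra hcon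
  push Not at hcon
  apply hne
  funext q
  have : Fact (0 < L) := ⟨hL⟩
  have hp : Function.Periodic (fun t : ℝ => φ (q + t • v)) L := by
    intro t
    show φ (q + (t + L) • v) = φ (q + t • v)
    rw [← hper (q + t • v)]; congr 1; module
  have hcl : Continuous hp.lift :=
    continuous_coinduced_dom.mpr (by
      show Continuous (fun t : ℝ => φ (q + t • v)); fun_prop)
  let F : C(AddCircle L, ℂ) := ⟨hp.lift, hcl⟩
  have hcoef : ∀ k, fourierCoeff F k = 0 := by
    intro k
    rw [fourierCoeff_eq_intervalIntegral _ _ 0, zero_add]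
    have h2 : ∫ x in (0:ℝ)..L, (fourier (-k) (x : AddCircle L)) • F x
        = fproj L (k * (2 * π) / L) v φ q := by
      refine intervalIntegral.integral_congr fun t _ => ?_
      simp only [fourier_coe_apply, smul_eq_mul]
      congr 2
      push_cast; ring
    rw [h2, hcon k]; simp
  have hs : Summable (fourierCoeff F) := by
    have : fourierCoeff F = 0 := funext hcoef
    rw [this]; exact summable_zero
  have h3 := has_pointwise_sum_fourier_series_of_summable hs ((0 : ℝ) : AddCircle L)
  simp only [hcoef, zero_smul] at h3
  have h4 := h3.unique hasSum_zero
  have h5 : F ((0 : ℝ) : AddCircle L) = φ (q + (0:ℝ) • v) := rfl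
  rw [h5] at h4
  simpa using h4

end FourierProjection

/-! ### Smooth periodic functions and the Heisenberg commutation relations -/

section SmoothPeriodic

variable {m : ℕ} {φ : Pt m → ℂ}

lemma heisAct_line (a b c : Fin m → ℝ) (q w : Pt m) (t : ℝ) :
    heisAct a b c (q + t • w)
      = heisAct a b c q + t • ((w.1, w.2.1, w.2.2 - fun j => a j * w.2.1 j) : Pt m) := by
  refine Prod.ext ?_ (Prod.ext ?_ ?_) <;> funext j <;>
    simp only [heisAct, Prod.fst_add, Prod.snd_add, Prod.smul_fst, Prod.smul_snd, Pi.add_apply,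
      Pi.smul_apply, Pi.sub_apply, smul_eq_mul] <;> ring

/-- Chain rule for a function invariant under a left translation. -/
lemma D_heisAct (hφ : ContDiff ℝ (⊤ : ℕ∞) φ) {a b c : Fin m → ℝ}
    (h : ∀ q, φ (heisAct a b c q) = φ q) (q w : Pt m) :
    fderiv ℝ φ (heisAct a b c q) (w.1, w.2.1, w.2.2 - fun j => a j * w.2.1 j)
      = fderiv ℝ φ q w := by
  rw [D_eq_lineDeriv hφ, D_eq_lineDeriv hφ, lineDeriv, lineDeriv]
  simp_rw [← heisAct_line, h]

lemma D_eX_heisAct (hφ : ContDiff ℝ (⊤ : ℕ∞) φ) {a b c : Fin m → ℝ}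
    (h : ∀ q, φ (heisAct a b c q) = φ q) (q : Pt m) (j : Fin m) :
    fderiv ℝ φ (heisAct a b c q) (eX m j) = fderiv ℝ φ q (eX m j) := by
  rw [← D_heisAct hφ h q]
  congr 1
  refine Prod.ext rfl (Prod.ext rfl ?_)
  funext i; simp [eX]

lemma D_eZ_heisAct (hφ : ContDiff ℝ (⊤ : ℕ∞) φ) {a b c : Fin m → ℝ}
    (h : ∀ q, φ (heisAct a b c q) = φ q) (q : Pt m) (j : Fin m) :
    fderiv ℝ φ (heisAct a b c q) (eZ m j) = fderiv ℝ φ q (eZ m j) := by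
  rw [← D_heisAct hφ h q]
  congr 1
  refine Prod.ext rfl (Prod.ext rfl ?_)
  funext i; simp [eZ]

lemma D_eY_heisAct (hφ : ContDiff ℝ (⊤ : ℕ∞) φ) {a b c : Fin m → ℝ}
    (h : ∀ q, φ (heisAct a b c q) = φ q) (q : Pt m) (j : Fin m) :
    fderiv ℝ φ (heisAct a b c q) (eY m j)
      = fderiv ℝ φ q (eY m j) + a j * fderiv ℝ φ q (eZ m j) := by
  have h1 : ((eY m j).1, (eY m j).2.1, (eY m j).2.2 - fun i => a i * (eY m j).2.1 i)
      = eY m j - a j • eZ m j := by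
    refine Prod.ext (by simp [eY, eZ]) (Prod.ext (by simp [eY, eZ]) ?_)
    funext i
    by_cases hi : i = j
    · subst hi; simp [eY, eZ]
    · simp [eY, eZ, hi]
  have h2 := D_heisAct hφ h q (eY m j)
  rw [h1, map_sub, map_smul, D_eZ_heisAct hφ h] at h2
  rw [← h2, Complex.real_smul]; ring

lemma smooth_coord (j : Fin m) : ContDiff ℝ (⊤ : ℕ∞) (fun q : Pt m => (q.1 j : ℂ)) :=
  Complex.ofRealCLM.contDiff.comp (by fun_prop)

lemma smooth_Xop (j : Fin m) (hφ : ContDiff ℝ (⊤ : ℕ∞) φ) : ContDiff ℝ (⊤ : ℕ∞) (Xop j φ) :=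
  smooth_D hφ _

lemma smooth_Zop (j : Fin m) (hφ : ContDiff ℝ (⊤ : ℕ∞) φ) : ContDiff ℝ (⊤ : ℕ∞) (Zop j φ) :=
  smooth_D hφ _

lemma smooth_Yop (j : Fin m) (hφ : ContDiff ℝ (⊤ : ℕ∞) φ) : ContDiff ℝ (⊤ : ℕ∞) (Yop j φ) :=
  (smooth_D hφ _).sub ((smooth_coord j).mul (smooth_D hφ _))

/-- The complex vector space of smooth `Γ^m`-periodic functions. -/
def HS (m : ℕ) : Submodule ℂ (Pt m → ℂ) where
  carrier := {φ | ContDiff ℝ (⊤ : ℕ∞) φ ∧ GPeriodic φ}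
  add_mem' := fun h1 h2 => ⟨h1.1.add h2.1, fun a b c h q => by
    simp [h1.2 a b c h q, h2.2 a b c h q]⟩
  zero_mem' := ⟨contDiff_const, fun _ _ _ _ _ => rfl⟩
  smul_mem' := fun k φ h1 => ⟨h1.1.const_smul k, fun a b c h q => by simp [h1.2 a b c h q]⟩

lemma diff_at (hφ : ContDiff ℝ (⊤ : ℕ∞) φ) (q : Pt m) : DifferentiableAt ℝ φ q :=
  hφ.differentiable (by simp) q

lemma D_add {ψ : Pt m → ℂ} (hφ : ContDiff ℝ (⊤ : ℕ∞) φ) (hψ : ContDiff ℝ (⊤ : ℕ∞) ψ)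
    (q w : Pt m) : fderiv ℝ (φ + ψ) q w = fderiv ℝ φ q w + fderiv ℝ ψ q w := by
  rw [fderiv_add (diff_at hφ q) (diff_at hψ q)]; rfl

lemma D_smul (c : ℂ) (hφ : ContDiff ℝ (⊤ : ℕ∞) φ) (q w : Pt m) :
    fderiv ℝ (c • φ) q w = c * fderiv ℝ φ q w := by
  rw [fderiv_const_smul (diff_at hφ q)]; rfl

lemma D_mul {ψ : Pt m → ℂ} (hφ : ContDiff ℝ (⊤ : ℕ∞) φ) (hψ : ContDiff ℝ (⊤ : ℕ∞) ψ)
    (q w : Pt m) : fderiv ℝ (fun q => φ q * ψ q) q w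
      = φ q * fderiv ℝ ψ q w + fderiv ℝ φ q w * ψ q := by
  rw [fderiv_fun_mul (diff_at hφ q) (diff_at hψ q)]
  simp [mul_comm]

/-- `X_j` as an endomorphism of the smooth periodic functions. -/
def XL (j : Fin m) : Module.End ℂ (HS m) where
  toFun φ := ⟨Xop j φ, smooth_Xop j φ.2.1, fun a b c h q =>
    D_eX_heisAct φ.2.1 (φ.2.2 a b c h) q j⟩
  map_add' φ ψ := Subtype.ext <| funext fun q => D_add φ.2.1 ψ.2.1 q _
  map_smul' c φ := Subtype.ext <| funext fun q => D_smul c φ.2.1 q _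

/-- `∂_{z_j}` as an endomorphism of the smooth periodic functions. -/
def ZL (j : Fin m) : Module.End ℂ (HS m) where
  toFun φ := ⟨Zop j φ, smooth_Zop j φ.2.1, fun a b c h q =>
    D_eZ_heisAct φ.2.1 (φ.2.2 a b c h) q j⟩
  map_add' φ ψ := Subtype.ext <| funext fun q => D_add φ.2.1 ψ.2.1 q _
  map_smul' c φ := Subtype.ext <| funext fun q => D_smul c φ.2.1 q _

/-- `Y_j` as an endomorphism of the smooth periodic functions. -/
def YL (j : Fin m) : Module.End ℂ (HS m) where
  toFun φ := ⟨Yop j φ, smooth_Yop j φ.2.1, fun a b c h q => by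
    simp only [Yop]
    rw [D_eY_heisAct φ.2.1 (φ.2.2 a b c h), D_eZ_heisAct φ.2.1 (φ.2.2 a b c h)]
    simp only [heisAct]; push_cast; ring⟩
  map_add' φ ψ := Subtype.ext <| funext fun q => by
    have h1 := D_add φ.2.1 ψ.2.1 q (eY m j)
    have h2 := D_add φ.2.1 ψ.2.1 q (eZ m j)
    simp only [Yop, Submodule.coe_add, Pi.add_apply, h1, h2]; ring
  map_smul' c φ := Subtype.ext <| funext fun q => by
    have h1 := D_smul c φ.2.1 q (eY m j)
    have h2 := D_smul c φ.2.1 q (eZ m j)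
    simp only [Yop, Submodule.coe_smul, Pi.smul_apply, smul_eq_mul, h1, h2, RingHom.id_apply]
    ring

lemma D_comm (hφ : ContDiff ℝ (⊤ : ℕ∞) φ) (q w w' : Pt m) :
    fderiv ℝ (fun q => fderiv ℝ φ q w) q w' = fderiv ℝ (fun q => fderiv ℝ φ q w') q w := by
  have hs : IsSymmSndFDerivAt ℝ φ q := hφ.contDiffAt.isSymmSndFDerivAt
    (by simpa using WithTop.coe_le_coe.2 (le_top : (2 : ℕ∞) ≤ ⊤))
  have hd : DifferentiableAt ℝ (fderiv ℝ φ) q :=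
    ((hφ.fderiv_right (m := (⊤ : ℕ∞)) (by simp)).differentiable (by simp)) q
  rw [fderiv_clm_apply hd (differentiableAt_const _), fderiv_clm_apply hd (differentiableAt_const _)]
  simpa using hs w' w

lemma D_coord (i : Fin m) (q w : Pt m) :
    fderiv ℝ (fun q : Pt m => (q.1 i : ℂ)) q w = (w.1 i : ℂ) := by
  have : (fun q : Pt m => (q.1 i : ℂ))
      = Complex.ofRealCLM ∘L (ContinuousLinearMap.proj i) ∘L (ContinuousLinearMap.fst ℝ _ _) := rfl
  rw [this, ContinuousLinearMap.fderiv]; rfl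

lemma D_Yop (hφ : ContDiff ℝ (⊤ : ℕ∞) φ) (j : Fin m) (q w : Pt m) :
    fderiv ℝ (Yop j φ) q w = fderiv ℝ (fun q => fderiv ℝ φ q (eY m j)) q w
      - ((q.1 j : ℂ) * fderiv ℝ (fun q => fderiv ℝ φ q (eZ m j)) q w
        + (w.1 j : ℂ) * fderiv ℝ φ q (eZ m j)) := by
  have h0 : Yop j φ = (fun q => fderiv ℝ φ q (eY m j))
      + (-1 : ℂ) • (fun q : Pt m => (q.1 j : ℂ) * fderiv ℝ φ q (eZ m j)) := by
    funext q; simp [Yop]; ring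
  have hs := (smooth_coord j).mul (smooth_D hφ (eZ m j))
  have hs2 : ContDiff ℝ (⊤ : ℕ∞)
      ((-1 : ℂ) • (fun q : Pt m => (q.1 j : ℂ) * fderiv ℝ φ q (eZ m j))) :=
    ContDiff.const_smul (-1 : ℂ) hs
  rw [h0, D_add (smooth_D hφ _) hs2, D_smul _ hs,
    D_mul (smooth_coord j) (smooth_D hφ _), D_coord]
  ring

lemma XL_comm (i j : Fin m) : XL i * XL j = XL j * XL i :=
  LinearMap.ext fun φ => Subtype.ext <| funext fun q => D_comm φ.2.1 q _ _

lemma ZL_comm (i j : Fin m) : ZL i * ZL j = ZL j * ZL i :=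
  LinearMap.ext fun φ => Subtype.ext <| funext fun q => D_comm φ.2.1 q _ _

lemma XZ_comm (i j : Fin m) : XL i * ZL j = ZL j * XL i :=
  LinearMap.ext fun φ => Subtype.ext <| funext fun q => D_comm φ.2.1 q _ _

lemma YZ_comm (i j : Fin m) : YL i * ZL j = ZL j * YL i :=
  LinearMap.ext fun φ => Subtype.ext <| funext fun q => by
    show Yop i (Zop j φ) q = fderiv ℝ (Yop i φ) q (eZ m j)
    rw [D_Yop φ.2.1, Yop]
    rw [show Zop j (φ : Pt m → ℂ) = fun q => fderiv ℝ φ q (eZ m j) from rfl]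
    rw [D_comm φ.2.1 q (eZ m j) (eY m i), D_comm φ.2.1 q (eZ m j) (eZ m i)]
    simp [eZ]

/-- The commutation relation `[X_j, Y_j] = -∂_{z_j}`, all other pairs commuting. -/
lemma XY_comm (i j : Fin m) : XL i * YL j = YL j * XL i - (if i = j then ZL j else 0) :=
  LinearMap.ext fun φ => Subtype.ext <| funext fun q => by
    have h1 : (((XL i * YL j) φ : HS m) : Pt m → ℂ) q = fderiv ℝ (Yop j φ) q (eX m i) := rfl
    have h2 : (((YL j * XL i) φ : HS m) : Pt m → ℂ) q = Yop j (Xop i φ) q := rfl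
    have h3 : ((ZL j φ : HS m) : Pt m → ℂ) q = fderiv ℝ φ q (eZ m j) := rfl
    rw [LinearMap.sub_apply, Submodule.coe_sub, Pi.sub_apply, h1, h2, D_Yop φ.2.1, Yop]
    rw [show Xop i (φ : Pt m → ℂ) = fun q => fderiv ℝ φ q (eX m i) from rfl]
    rw [D_comm φ.2.1 q (eX m i) (eY m j), D_comm φ.2.1 q (eX m i) (eZ m j)]
    by_cases hij : i = j
    · subst hij; simp [h3, eX]; ring
    · have : j ≠ i := fun h => hij h.symm
      simp [hij, eX, this]

lemma YY_comm (i j : Fin m) : YL i * YL j = YL j * YL i :=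
  LinearMap.ext fun φ => Subtype.ext <| funext fun q => by
    show fderiv ℝ (Yop j φ) q (eY m i) - (q.1 i : ℂ) * fderiv ℝ (Yop j φ) q (eZ m i)
      = fderiv ℝ (Yop i φ) q (eY m j) - (q.1 j : ℂ) * fderiv ℝ (Yop i φ) q (eZ m j)
    simp only [D_Yop φ.2.1]
    rw [D_comm φ.2.1 q (eY m j) (eY m i), D_comm φ.2.1 q (eZ m j) (eY m i),
      D_comm φ.2.1 q (eY m j) (eZ m i), D_comm φ.2.1 q (eZ m j) (eZ m i)]
    simp [eY, eZ]
    ring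

/-- `Δ_j` as an endomorphism of the smooth periodic functions. -/
def DL (j : Fin m) : Module.End ℂ (HS m) := XL j * XL j + YL j * YL j

lemma DL_apply (j : Fin m) (φ : HS m) (q : Pt m) :
    ((DL j φ : HS m) : Pt m → ℂ) q = DeltaJ j φ q := rfl

lemma Delta_eq (φ : HS m) (q : Pt m) :
    ((∑ j, DL j φ : HS m) : Pt m → ℂ) q = Delta φ q := by
  simp only [Submodule.coe_sum, Finset.sum_apply]; rfl

end SmoothPeriodic

/-! ### Nonnegativity of the eigenvalues -/

section Positivity

variable {m : ℕ} {φ : Pt m → ℂ}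

lemma sqrt_two_pi_pos : 0 < Real.sqrt (2 * π) := Real.sqrt_pos.2 (by positivity)

/-- The fundamental box is compact and meets every `Γ^m`-orbit, so continuous periodic functions
attain their maximum modulus. -/
lemma exists_max_norm (hc : Continuous φ) (hp : GPeriodic φ) :
    ∃ q₀, ∀ q, ‖φ q‖ ≤ ‖φ q₀‖ := by
  have ha := sqrt_two_pi_pos
  have h2 : (0 : ℝ) < 2 * π := by positivity
  set K : Set (Pt m) := Set.Icc 0 (fun _ => Real.sqrt (2 * π), fun _ => Real.sqrt (2 * π),
    fun _ => 2 * π) with hK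
  have hKc : IsCompact K := isCompact_Icc
  have hKn : K.Nonempty := ⟨0, le_rfl, fun _ => ha.le, fun _ => ha.le, fun _ => h2.le⟩
  obtain ⟨q₀, -, hq₀⟩ := hKc.exists_isMaxOn hKn hc.norm.continuousOn
  refine ⟨q₀, fun q => ?_⟩
  set a : Fin m → ℝ := fun j => ((-toIcoDiv ha 0 (q.1 j) : ℤ) : ℝ) * Real.sqrt (2 * π) with hadef
  set b : Fin m → ℝ := fun j => ((-toIcoDiv ha 0 (q.2.1 j) : ℤ) : ℝ) * Real.sqrt (2 * π)
    with hbdef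
  set c : Fin m → ℝ := fun j =>
    ((-toIcoDiv h2 0 (q.2.2 j - a j * q.2.1 j) : ℤ) : ℝ) * (2 * π) with hcdef
  have hG : InGamma a b c := ⟨fun j => ⟨_, rfl⟩, fun j => ⟨_, rfl⟩, fun j => ⟨_, rfl⟩⟩
  have hm : heisAct a b c q ∈ K := by
    have e1 : ∀ j, 0 ≤ a j + q.1 j ∧ a j + q.1 j ≤ Real.sqrt (2 * π) := fun j => by
      have := sub_toIcoDiv_zsmul_mem_Ico ha 0 (q.1 j)
      simp only [zsmul_eq_mul, Set.mem_Ico, zero_add] at this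
      simp only [hadef]; push_cast; constructor <;> linarith [this.1, this.2]
    have e2 : ∀ j, 0 ≤ b j + q.2.1 j ∧ b j + q.2.1 j ≤ Real.sqrt (2 * π) := fun j => by
      have := sub_toIcoDiv_zsmul_mem_Ico ha 0 (q.2.1 j)
      simp only [zsmul_eq_mul, Set.mem_Ico, zero_add] at this
      simp only [hbdef]; push_cast; constructor <;> linarith [this.1, this.2]
    have e3 : ∀ j, 0 ≤ c j + q.2.2 j - a j * q.2.1 j ∧ c j + q.2.2 j - a j * q.2.1 j ≤ 2 * π :=
      fun j => by
      have := sub_toIcoDiv_zsmul_mem_Ico h2 0 (q.2.2 j - a j * q.2.1 j)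
      simp only [zsmul_eq_mul, Set.mem_Ico, zero_add] at this
      simp only [hcdef]; push_cast; constructor <;> linarith [this.1, this.2]
    exact ⟨⟨fun j => (e1 j).1, fun j => (e2 j).1, fun j => (e3 j).1⟩,
      ⟨fun j => (e1 j).2, fun j => (e2 j).2, fun j => (e3 j).2⟩⟩
  rw [← hp a b c hG q]
  exact hq₀ hm

/-- The second derivative is nonpositive at a global maximum. -/
lemma deriv_deriv_nonpos {f f' : ℝ → ℝ} {f'' : ℝ} (hf : ∀ t, HasDerivAt f (f' t) t)
    (hf' : HasDerivAt f' f'' 0) (hmax : ∀ t, f t ≤ f 0) : f'' ≤ 0 := by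
  by_contra hcon
  push Not at hcon
  have hd : deriv f = f' := funext fun t => (hf t).deriv
  have hlm : IsLocalMax f 0 := Eventually.of_forall hmax
  have h1 : IsLocalMin f 0 := isLocalMin_of_deriv_deriv_pos (by rw [hd, hf'.deriv]; exact hcon)
    hlm.deriv_eq_zero (hf 0).continuousAt
  -- being both a local maximum and a local minimum, `f` is locally constant
  have hconst : f =ᶠ[𝓝 0] fun _ => f 0 := by
    filter_upwards [h1] with t ht
    exact le_antisymm (hmax t) ht
  have h2 : deriv f =ᶠ[𝓝 0] deriv fun _ => f 0 := hconst.deriv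
  have h3 := h2.deriv_eq
  rw [hd, hf'.deriv] at h3
  simp at h3
  exact hcon.ne' h3

lemma secondD_nonpos (hφ : ContDiff ℝ (⊤ : ℕ∞) φ) {q₀ : Pt m} (hq : ∀ q, ‖φ q‖ ≤ ‖φ q₀‖)
    (w : Pt m) :
    (starRingEnd ℂ (φ q₀) * fderiv ℝ (fun q => fderiv ℝ φ q w) q₀ w).re ≤ 0 := by
  set c := starRingEnd ℂ (φ q₀) with hc
  have hline : ∀ t : ℝ, HasDerivAt (fun t : ℝ => q₀ + t • w) w t := fun t => by
    simpa using ((hasDerivAt_id t).smul_const w).const_add q₀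
  have key : ∀ {ψ : Pt m → ℂ}, ContDiff ℝ (⊤ : ℕ∞) ψ → ∀ t : ℝ,
      HasDerivAt (fun t : ℝ => (c * ψ (q₀ + t • w)).re) (c * fderiv ℝ ψ (q₀ + t • w) w).re t := by
    intro ψ hψ t
    have h1 : HasDerivAt (fun t : ℝ => ψ (q₀ + t • w)) (fderiv ℝ ψ (q₀ + t • w) w) t :=
      (diff_at hψ _).hasFDerivAt.comp_hasDerivAt t (hline t)
    exact Complex.reCLM.hasFDerivAt.comp_hasDerivAt t (h1.const_mul c)
  have h2 := key (smooth_D hφ w) 0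
  refine deriv_deriv_nonpos (f := fun t : ℝ => (c * φ (q₀ + t • w)).re) (key hφ)
    (by simpa using h2) fun t => ?_
  calc (c * φ (q₀ + t • w)).re ≤ ‖c * φ (q₀ + t • w)‖ := Complex.re_le_norm _
    _ = ‖φ q₀‖ * ‖φ (q₀ + t • w)‖ := by rw [norm_mul, hc, RCLike.norm_conj]
    _ ≤ ‖φ q₀‖ * ‖φ q₀‖ := by gcongr; exact hq _
    _ = (c * φ (q₀ + (0:ℝ) • w)).re := by
      rw [zero_smul, add_zero, hc, mul_comm, mul_comm (starRingEnd ℂ (φ q₀)),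
        Complex.mul_conj, Complex.ofReal_re, Complex.normSq_eq_norm_sq, sq]

/-- `Y_j²` at `q` is the second derivative along a straight line through `q`. -/
lemma Yop_Yop (hφ : ContDiff ℝ (⊤ : ℕ∞) φ) (j : Fin m) (q : Pt m) :
    Yop j (Yop j φ) q = fderiv ℝ (fun p => fderiv ℝ φ p (eY m j - (q.1 j) • eZ m j)) q
      (eY m j - (q.1 j) • eZ m j) := by
  have h0 : (fun p => fderiv ℝ φ p (eY m j - (q.1 j) • eZ m j))
      = (fun p => fderiv ℝ φ p (eY m j)) + (-(q.1 j : ℂ)) • (fun p => fderiv ℝ φ p (eZ m j)) := by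
    funext p
    rw [map_sub, map_smul]; simp; ring
  have hs2 : ContDiff ℝ (⊤ : ℕ∞) ((-(q.1 j : ℂ)) • (fun p => fderiv ℝ φ p (eZ m j))) :=
    ContDiff.const_smul (-(q.1 j : ℂ)) (smooth_D hφ _)
  rw [h0, D_add (smooth_D hφ _) hs2, D_smul _ (smooth_D hφ _), Yop, D_Yop hφ, D_Yop hφ]
  simp only [map_sub, map_smul, Complex.real_smul]
  simp [eY, eZ]; ring

/-- Eigenvalues of `-Δ` are nonnegative, by the maximum principle: at a maximum of `|φ|` the
function `Re (conj (φ q₀) φ)` has nonpositive second derivatives along `X_j` and `Y_j`. -/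
lemma eigenvalue_nonneg (φ : HS m) (hne : φ ≠ 0) (μ : ℝ)
    (h : ∑ j, DL j φ = (-(μ : ℂ)) • φ) : 0 ≤ μ := by
  obtain ⟨q₀, hq⟩ := exists_max_norm φ.2.1.continuous φ.2.2
  have hpos : 0 < ‖(φ : Pt m → ℂ) q₀‖ := by
    by_contra hcon
    apply hne
    refine Subtype.ext (funext fun q => ?_)
    have := hq q
    exact norm_eq_zero.1 (le_antisymm (by linarith) (norm_nonneg _))
  have h1 : Delta φ q₀ = -(μ : ℂ) * (φ : Pt m → ℂ) q₀ := by
    rw [← Delta_eq, h]; rfl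
  have h2 : (starRingEnd ℂ ((φ : Pt m → ℂ) q₀) * Delta φ q₀).re ≤ 0 := by
    rw [Delta, Finset.mul_sum, Complex.re_sum]
    refine Finset.sum_nonpos fun j _ => ?_
    rw [DeltaJ, mul_add, Complex.add_re, Yop_Yop φ.2.1]
    exact add_nonpos (secondD_nonpos φ.2.1 hq _) (secondD_nonpos φ.2.1 hq _)
  have h3 : starRingEnd ℂ ((φ : Pt m → ℂ) q₀) * Delta φ q₀
      = ((-μ * ‖(φ : Pt m → ℂ) q₀‖ ^ 2 : ℝ) : ℂ) := by
    rw [h1, ← Complex.normSq_eq_norm_sq, Complex.ofReal_mul, ← Complex.mul_conj]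
    push_cast; ring
  rw [h3, Complex.ofReal_re] at h2
  nlinarith [pow_pos hpos 2]

end Positivity

/-! ### Ladder operators -/

section Ladder

variable {m : ℕ}

/-- The ladder operator `X_j + s Y_j`, used with `s = ±i`. -/
def AL (s : ℂ) (j : Fin m) : Module.End ℂ (HS m) := XL j + s • YL j

lemma AL_apply (s : ℂ) (j : Fin m) (φ : HS m) : AL s j φ = XL j φ + s • YL j φ := rfl

lemma DL_eq (j : Fin m) (φ : HS m) : DL j φ = XL j (XL j φ) + YL j (YL j φ) := rfl

lemma X_X (i j : Fin m) (φ : HS m) : XL i (XL j φ) = XL j (XL i φ) :=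
  LinearMap.congr_fun (XL_comm i j) φ
lemma Y_Y (i j : Fin m) (φ : HS m) : YL i (YL j φ) = YL j (YL i φ) :=
  LinearMap.congr_fun (YY_comm i j) φ
lemma X_Z (i j : Fin m) (φ : HS m) : XL i (ZL j φ) = ZL j (XL i φ) :=
  LinearMap.congr_fun (XZ_comm i j) φ
lemma Y_Z (i j : Fin m) (φ : HS m) : YL i (ZL j φ) = ZL j (YL i φ) :=
  LinearMap.congr_fun (YZ_comm i j) φ
lemma X_Y_self (j : Fin m) (φ : HS m) : XL j (YL j φ) = YL j (XL j φ) - ZL j φ := by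
  have := LinearMap.congr_fun (XY_comm j j) φ
  simpa using this
lemma X_Y_ne {i j : Fin m} (hij : i ≠ j) (φ : HS m) : XL i (YL j φ) = YL j (XL i φ) := by
  have := LinearMap.congr_fun (XY_comm i j) φ
  simpa [hij] using this

lemma Z_AL (s : ℂ) (i j : Fin m) (φ : HS m) : ZL i (AL s j φ) = AL s j (ZL i φ) := by
  simp only [AL_apply, map_add, map_smul, X_Z, Y_Z]

lemma X_AL {i j : Fin m} (hij : i ≠ j) (s : ℂ) (φ : HS m) :
    XL i (AL s j φ) = AL s j (XL i φ) := by
  simp only [AL_apply, map_add, map_smul, X_Y_ne hij, X_X i j]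

lemma Y_AL {i j : Fin m} (hij : i ≠ j) (s : ℂ) (φ : HS m) :
    YL i (AL s j φ) = AL s j (YL i φ) := by
  simp only [AL_apply, map_add, map_smul, X_Y_ne hij.symm, Y_Y i j]

lemma D_AL {i j : Fin m} (hij : i ≠ j) (s : ℂ) (φ : HS m) :
    DL i (AL s j φ) = AL s j (DL i φ) := by
  rw [DL_eq, DL_eq, X_AL hij, X_AL hij, Y_AL hij, Y_AL hij, map_add]

lemma D_AL_self {s : ℂ} (hs : s * s = -1) (j : Fin m) (φ : HS m) :
    DL j (AL s j φ) = AL s j (DL j φ) - (2 * s) • ZL j (AL s j φ) := by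
  simp only [DL_eq, AL_apply, map_add, map_smul, map_sub, X_Y_self, X_Z, Y_Z]
  linear_combination (norm := module) (2 : ℂ) • hs • ZL j (YL j φ)

lemma AL_AL {s : ℂ} (hs : s * s = -1) (j : Fin m) (φ : HS m) :
    AL (-s) j (AL s j φ) = DL j φ - s • ZL j φ := by
  simp only [DL_eq, AL_apply, map_add, map_smul, X_Y_self]
  linear_combination (norm := module) (-1 : ℂ) • hs • YL j (YL j φ)

/-- Lowering an eigenfunction until it is annihilated by every lowering operator determines its
eigenvalue; the procedure stops as each step lowers the (nonnegative) eigenvalue by at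
least `2`. -/
lemma eigenvalue_form (α k l : Fin m → ℤ) (N : ℕ) :
    ∀ (μ : ℝ) (φ : HS m), μ < N → φ ≠ 0 → ∑ j, DL j φ = (-(μ : ℂ)) • φ →
      (∀ j, ZL j φ = (Complex.I * (α j : ℂ)) • φ) →
      (∀ i, α i = 0 → XL i φ = (Complex.I * ((k i * Real.sqrt (2 * π) : ℝ) : ℂ)) • φ ∧
        YL i φ = (Complex.I * ((l i * Real.sqrt (2 * π) : ℝ) : ℂ)) • φ) →
      ∃ n : Fin m → ℕ, μ = (∑ j ∈ Finset.univ.filter (fun j => α j ≠ 0),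
          (2 * (n j : ℝ) + 1) * |(α j : ℝ)|) +
        2 * π * ∑ i ∈ (Finset.univ.filter (fun j => α j ≠ 0))ᶜ, ((k i : ℝ) ^ 2 + (l i : ℝ) ^ 2) := by
  induction N with
  | zero =>
    intro μ φ hμ hne h _ _
    have := eigenvalue_nonneg φ hne μ h
    simp at hμ; linarith
  | succ N ih =>
    intro μ φ hμ hne h hZ hXY
    set J := Finset.univ.filter (fun j => α j ≠ 0) with hJ
    -- `σ j` is the sign of `α j`; the lowering operator is `X_j + i σ_j Y_j`
    obtain ⟨σ, hσ1, hσ2⟩ : ∃ σ : Fin m → ℝ, (∀ j, σ j * σ j = 1) ∧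
        ∀ j, σ j * α j = |(α j : ℝ)| := by
      refine ⟨fun j => if 0 ≤ (α j : ℝ) then 1 else -1, fun j => ?_, fun j => ?_⟩
      · dsimp only; split_ifs <;> norm_num
      · dsimp only
        split_ifs with h0
        · rw [abs_of_nonneg h0, one_mul]
        · rw [abs_of_neg (not_le.1 h0)]; ring
    have hs : ∀ j, (Complex.I * (σ j : ℂ)) * (Complex.I * (σ j : ℂ)) = -1 := fun j => by
      have : (σ j : ℂ) * σ j = 1 := by exact_mod_cast hσ1 j
      linear_combination (Complex.I * Complex.I) * this + Complex.I_mul_I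
    have hσα : ∀ j, (σ j : ℂ) * α j = (|(α j : ℝ)| : ℝ) := fun j => by
      rw [← hσ2 j]; push_cast; rfl
    by_cases hlow : ∃ j ∈ J, AL (Complex.I * σ j) j φ ≠ 0
    · obtain ⟨j, hjJ, hj⟩ := hlow
      have hαj : α j ≠ 0 := (Finset.mem_filter.1 hjJ).2
      set s := Complex.I * (σ j : ℂ) with hsdef
      have hα1 : (1 : ℝ) ≤ |(α j : ℝ)| := by
        have := Int.one_le_abs hαj
        exact_mod_cast this
      have hZ' : ∀ i, ZL i (AL s j φ) = (Complex.I * (α i : ℂ)) • AL s j φ := fun i => by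
        rw [Z_AL, hZ, map_smul]
      have hD' : ∑ i, DL i (AL s j φ) = (-((μ - 2 * |(α j : ℝ)| : ℝ) : ℂ)) • AL s j φ := by
        have e1 : ∀ i, DL i (AL s j φ) = AL s j (DL i φ)
            + if i = j then (2 * ((|(α j : ℝ)| : ℝ) : ℂ)) • AL s j φ else 0 := by
          intro i
          split_ifs with hij
          · subst hij
            rw [D_AL_self (hs i), hZ', smul_smul, ← hσα i, sub_eq_add_neg, ← neg_smul]
            congr 2
            linear_combination (-2 * (σ i : ℂ) * α i) * Complex.I_mul_I
          · rw [D_AL hij, add_zero]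
        rw [Finset.sum_congr rfl fun i _ => e1 i, Finset.sum_add_distrib, ← map_sum, h,
          Finset.sum_ite_eq' Finset.univ j, if_pos (Finset.mem_univ j), map_smul]
        push_cast; module
      have hXY' : ∀ i, α i = 0 →
          XL i (AL s j φ) = (Complex.I * ((k i * Real.sqrt (2 * π) : ℝ) : ℂ)) • AL s j φ ∧
          YL i (AL s j φ) = (Complex.I * ((l i * Real.sqrt (2 * π) : ℝ) : ℂ)) • AL s j φ := by
        intro i hi
        have hij : i ≠ j := by rintro rfl; exact hαj hi
        rw [X_AL hij, Y_AL hij, (hXY i hi).1, (hXY i hi).2, map_smul, map_smul]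
        exact ⟨rfl, rfl⟩
      obtain ⟨n, hn⟩ := ih (μ - 2 * |(α j : ℝ)|) _ (by push_cast at hμ; linarith) hj hD' hZ' hXY'
      refine ⟨Function.update n j (n j + 1), ?_⟩
      have e2 : ∑ i ∈ J, (2 * ((Function.update n j (n j + 1) i : ℕ) : ℝ) + 1) * |(α i : ℝ)|
          = (∑ i ∈ J, (2 * (n i : ℝ) + 1) * |(α i : ℝ)|) + 2 * |(α j : ℝ)| := by
        rw [← Finset.add_sum_erase J _ hjJ, ← Finset.add_sum_erase J (fun i => (2 * (n i : ℝ) + 1)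
          * |(α i : ℝ)|) hjJ, Function.update_self]
        rw [Finset.sum_congr rfl fun i hi => by
          rw [Function.update_of_ne (Finset.ne_of_mem_erase hi)]]
        push_cast; ring
      rw [e2]; linarith
    · push Not at hlow
      refine ⟨fun _ => 0, ?_⟩
      have e1 : ∀ j, DL j φ = (-((if α j ≠ 0 then |(α j : ℝ)| else
          2 * π * ((k j : ℝ) ^ 2 + (l j : ℝ) ^ 2) : ℝ) : ℂ)) • φ := by
        intro j
        split_ifs with hj
        · have h1 := AL_AL (hs j) j φ
          rw [hlow j (Finset.mem_filter.2 ⟨Finset.mem_univ j, hj⟩), map_zero, hZ, smul_smul] at h1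
          rw [← hσα j]
          linear_combination (norm := module)
            -h1 + ((σ j : ℂ) * α j) • Complex.I_mul_I • φ
        · push Not at hj
          have hsq : ((Real.sqrt (2 * π) : ℝ) : ℂ) * (Real.sqrt (2 * π) : ℝ) = 2 * π := by
            rw [← Complex.ofReal_mul, Real.mul_self_sqrt (by positivity)]; push_cast; rfl
          rw [DL_eq, (hXY j hj).1, (hXY j hj).2, map_smul, map_smul, (hXY j hj).1, (hXY j hj).2,
            smul_smul, smul_smul, ← add_smul]
          congr 1
          push_cast
          linear_combination (((k j : ℂ) ^ 2 + (l j : ℂ) ^ 2) *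
            ((Real.sqrt (2 * π) : ℝ) : ℂ) ^ 2) * Complex.I_mul_I -
            ((k j : ℂ) ^ 2 + (l j : ℂ) ^ 2) * hsq
      rw [Finset.sum_congr rfl fun j _ => e1 j, ← Finset.sum_smul] at h
      have h2 := smul_left_injective ℂ hne h
      rw [Finset.sum_neg_distrib, neg_inj, ← Complex.ofReal_sum] at h2
      have h3 := Complex.ofReal_injective h2
      rw [← h3, Finset.sum_ite, hJ, Finset.compl_filter, Finset.mul_sum]
      simp

/-- Raising operators produce all the eigenvalues above a given one. -/
lemma exists_raised {α μ₀ : Fin m → ℝ} (hα : ∀ j, 0 ≤ α j) (hμ : ∀ j, 0 ≤ μ₀ j)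
    (hbase : ∃ φ : HS m, φ ≠ 0 ∧ (∀ j, ZL j φ = (Complex.I * (α j : ℂ)) • φ) ∧
      ∀ j, DL j φ = (-(μ₀ j : ℂ)) • φ) (N : ℕ) :
    ∀ n : Fin m → ℕ, ∑ j, n j = N → (∀ j, n j ≠ 0 → 0 < α j) →
      ∃ φ : HS m, φ ≠ 0 ∧ (∀ j, ZL j φ = (Complex.I * (α j : ℂ)) • φ) ∧
        ∀ j, DL j φ = (-((μ₀ j + 2 * n j * α j : ℝ) : ℂ)) • φ := by
  induction N with
  | zero =>
    intro n hn _
    have h0 : ∀ j, n j = 0 := fun j => by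
      have := Finset.sum_eq_zero_iff.1 hn; exact this j (Finset.mem_univ j)
    simpa [h0] using hbase
  | succ N ih =>
    intro n hn hpos
    obtain ⟨j, hj⟩ : ∃ j, n j ≠ 0 := by
      by_contra hcon
      push Not at hcon
      simp [hcon] at hn
    set n' := Function.update n j (n j - 1) with hn'
    have hj' : n' j = n j - 1 := by simp [hn']
    have hne' : ∀ i, i ≠ j → n' i = n i := fun i hi => by simp [hn', hi]
    have hsum : ∑ i, n' i = N := by
      have h1 := Finset.add_sum_erase Finset.univ n (Finset.mem_univ j)
      have h2 := Finset.add_sum_erase Finset.univ n' (Finset.mem_univ j)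
      have h3 : ∑ i ∈ Finset.univ.erase j, n' i = ∑ i ∈ Finset.univ.erase j, n i :=
        Finset.sum_congr rfl fun i hi => hne' i (Finset.ne_of_mem_erase hi)
      omega
    obtain ⟨φ, hφ, hZ, hD⟩ := ih n' hsum fun i hi => by
      by_cases hij : i = j
      · rw [hij]; exact hpos j hj
      · exact hpos i (by rwa [← hne' i hij])
    have hs : (-Complex.I) * (-Complex.I) = -1 := by simp
    have hZ' : ∀ i, ZL i (AL (-Complex.I) j φ)
        = (Complex.I * (α i : ℂ)) • AL (-Complex.I) j φ := fun i => by
      rw [Z_AL, hZ, map_smul]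
    refine ⟨AL (-Complex.I) j φ, fun h0 => hφ ?_, hZ', fun i => ?_⟩
    · -- lowering the raised function gives back a nonzero multiple of `φ`
      have h1 := AL_AL hs j φ
      rw [h0, map_zero, hZ, hD] at h1
      have h2 : ((-(μ₀ j + 2 * n' j * α j + α j) : ℝ) : ℂ) • φ = 0 := by
        push_cast at h1 ⊢
        linear_combination (norm := module) -h1 - (α j : ℂ) • Complex.I_mul_I • φ
      refine (smul_eq_zero.1 h2).resolve_left fun h3 => ?_
      have h4 := Complex.ofReal_eq_zero.1 h3
      have := hpos j hj
      have := hμ j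
      have : 0 ≤ 2 * (n' j : ℝ) * α j := by have := hα j; positivity
      linarith
    · by_cases hij : i = j
      · subst hij
        have hcast : (n i : ℝ) = n' i + 1 := by
          have : n i = n' i + 1 := by omega
          exact_mod_cast this
        rw [D_AL_self hs, hZ', hD, map_smul, hcast]
        push_cast
        linear_combination (norm := module)
          (2 * (α i : ℂ)) • Complex.I_mul_I • AL (-Complex.I) i φ
      · rw [D_AL hij, hD, map_smul, hne' i hij]

end Ladder

/-! ### Reduction to simultaneous eigenfunctions -/

section Reduction

variable {m : ℕ} {L κ : ℝ} {v : Pt m}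

/-- `ψ` is an eigenvector, for the same eigenvalue, of each of the operators `X_i`, `Y_i`,
`∂_{z_i}` and `Δ` of which `φ` is an eigenvector. -/
def SameModes (φ ψ : HS m) : Prop :=
  ∀ c : ℂ, (∀ i, (XL i φ = c • φ → XL i ψ = c • ψ) ∧ (YL i φ = c • φ → YL i ψ = c • ψ) ∧
    (ZL i φ = c • φ → ZL i ψ = c • ψ)) ∧ (∑ i, DL i φ = c • φ → ∑ i, DL i ψ = c • ψ)

lemma SameModes.refl (φ : HS m) : SameModes φ φ := fun _ => ⟨fun _ => ⟨id, id, id⟩, id⟩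

lemma SameModes.trans {φ ψ χ : HS m} (h1 : SameModes φ ψ) (h2 : SameModes ψ χ) :
    SameModes φ χ := fun c =>
  ⟨fun i => ⟨((h2 c).1 i).1 ∘ ((h1 c).1 i).1, ((h2 c).1 i).2.1 ∘ ((h1 c).1 i).2.1,
    ((h2 c).1 i).2.2 ∘ ((h1 c).1 i).2.2⟩, (h2 c).2 ∘ (h1 c).2⟩

lemma fproj_Yop {f : Pt m → ℂ} (hf : ContDiff ℝ (⊤ : ℕ∞) f) (i : Fin m)
    (h : v.1 i = 0 ∨ ∀ q, fderiv ℝ f q (eZ m i) = 0) :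
    Yop i (fproj L κ v f) = fproj L κ v (Yop i f) := by
  funext q
  rw [Yop, fproj_fderiv hf, fproj_fderiv hf, sub_eq_add_neg, ← neg_mul]
  have h1 := congrFun (fproj_const_mul (L := L) (κ := κ) (v := v) (-(q.1 i : ℂ))
    (fun q => fderiv ℝ f q (eZ m i))) q
  have h2 : fproj L κ v (fun q' => fderiv ℝ f q' (eY m i)
        + -(q.1 i : ℂ) * fderiv ℝ f q' (eZ m i)) q
      = fproj L κ v (fun q' => fderiv ℝ f q' (eY m i)) q
        + fproj L κ v (fun q' => -(q.1 i : ℂ) * fderiv ℝ f q' (eZ m i)) q :=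
    congrFun (fproj_add (L := L) (κ := κ) (v := v) (smooth_D hf (eY m i)).continuous
    ((continuous_const (y := -(q.1 i : ℂ))).mul (smooth_D hf (eZ m i)).continuous)) q
  rw [← h1, ← h2]
  refine intervalIntegral.integral_congr fun t _ => ?_
  simp only [Yop]
  congr 1
  rcases h with h | h
  · simp [h]; ring
  · simp [h]

/-- Fourier projection along `v` inside the space of smooth periodic functions. Either `Γ^m` and
the fields `X_i`, `Y_i` commute with translation along `v`, or the function does not see the
difference; this is what the last two hypotheses say. -/
lemma exists_projection (φ : HS m) (hφ : φ ≠ 0) (hL : 0 < L)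
    (hper : ∀ q, (φ : Pt m → ℂ) (q + L • v) = (φ : Pt m → ℂ) q)
    (hv : ∀ i, v.1 i = 0 ∨ ZL i φ = 0)
    (hact : ∀ a b c, InGamma a b c → ∀ q (t : ℝ),
      (φ : Pt m → ℂ) (heisAct a b c q + t • v) = (φ : Pt m → ℂ) (heisAct a b c (q + t • v))) :
    ∃ (k : ℤ) (ψ : HS m), ψ ≠ 0 ∧ SameModes φ ψ ∧
      ∀ q, fderiv ℝ (ψ : Pt m → ℂ) q v
        = (Complex.I * ((k * (2 * π) / L : ℝ) : ℂ)) * (ψ : Pt m → ℂ) q := by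
  have hφ' : (φ : Pt m → ℂ) ≠ 0 := fun h => hφ (Subtype.ext h)
  obtain ⟨k, hk⟩ := exists_fproj_ne_zero φ.2.1.continuous hL hper hφ'
  set κ : ℝ := k * (2 * π) / L with hκ
  have hκ' : ∃ k : ℤ, κ * L = k * (2 * π) := ⟨k, by rw [hκ]; field_simp⟩
  have hP : GPeriodic (fproj L κ v φ) := by
    intro a b c h q
    refine intervalIntegral.integral_congr fun t _ => ?_
    rw [hact a b c h, φ.2.2 a b c h]
  set ψ : HS m := ⟨fproj L κ v φ, fproj_smooth φ.2.1, hP⟩ with hψ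
  have hX : ∀ (i : Fin m) (f : HS m), Xop i (fproj L κ v f) = fproj L κ v (XL i f) :=
    fun i f => funext fun q => fproj_fderiv f.2.1 q _
  have hZ : ∀ (i : Fin m) (f : HS m), Zop i (fproj L κ v f) = fproj L κ v (ZL i f) :=
    fun i f => funext fun q => fproj_fderiv f.2.1 q _
  have hY : ∀ (i : Fin m) (f : HS m), (v.1 i = 0 ∨ ZL i f = 0) →
      Yop i (fproj L κ v f) = fproj L κ v (YL i f) := fun i f h =>
    fproj_Yop f.2.1 i (h.imp_right fun h q => congrFun (congrArg Subtype.val h) q)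
  have hsmul : ∀ (c : ℂ), fproj L κ v ((c • φ : HS m) : Pt m → ℂ) = c • fproj L κ v φ :=
    fun c => fproj_const_mul c _
  refine ⟨k, ψ, fun h => hk (congrArg Subtype.val h), fun c => ⟨fun i => ⟨fun h => ?_, fun h => ?_,
    fun h => ?_⟩, fun h => ?_⟩, fun q => fproj_D φ.2.1 hκ' hper q⟩
  · refine Subtype.ext ?_
    show Xop i (fproj L κ v φ) = c • fproj L κ v φ
    rw [hX, h, hsmul]
  · refine Subtype.ext ?_
    show Yop i (fproj L κ v φ) = c • fproj L κ v φ
    rw [hY i φ (hv i), h, hsmul]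
  · refine Subtype.ext ?_
    show Zop i (fproj L κ v φ) = c • fproj L κ v φ
    rw [hZ, h, hsmul]
  · refine Subtype.ext ?_
    have hD : ∀ i, ((DL i ψ : HS m) : Pt m → ℂ) = fproj L κ v (DL i φ) := by
      intro i
      have hvi : v.1 i = 0 ∨ ZL i (YL i φ) = 0 := (hv i).imp_right fun h => by
        rw [← Y_Z, h, map_zero]
      have e1 : ((DL i ψ : HS m) : Pt m → ℂ) = fun q => Xop i (Xop i (fproj L κ v φ)) q
          + Yop i (Yop i (fproj L κ v φ)) q := rfl
      have e2 : ((DL i φ : HS m) : Pt m → ℂ) = fun q => ((XL i (XL i φ) : HS m) : Pt m → ℂ) q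
          + ((YL i (YL i φ) : HS m) : Pt m → ℂ) q := rfl
      rw [e1, e2, fproj_add (XL i (XL i φ)).2.1.continuous (YL i (YL i φ)).2.1.continuous,
        hX, hX, hY i φ (hv i), hY i (YL i φ) hvi]
    have e3 : ((∑ i, DL i φ : HS m) : Pt m → ℂ)
        = fun q => ∑ i, ((DL i φ : HS m) : Pt m → ℂ) q := by
      funext q; simp only [Submodule.coe_sum, Finset.sum_apply]
    have e4 : ((∑ i, DL i ψ : HS m) : Pt m → ℂ)
        = fproj L κ v ((∑ i, DL i φ : HS m) : Pt m → ℂ) := by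
      rw [e3, fproj_sum _ _ fun i _ => (DL i φ).2.1.continuous]
      funext q; simp only [Submodule.coe_sum, Finset.sum_apply, hD]
    rw [e4, h, hsmul]; rfl

lemma inGamma_zero : InGamma (0 : Fin m → ℝ) 0 0 :=
  ⟨fun _ => ⟨0, by simp⟩, fun _ => ⟨0, by simp⟩, fun _ => ⟨0, by simp⟩⟩

lemma single_int (j : Fin m) (r : ℝ) :
    ∀ i, ∃ k : ℤ, (Pi.single j r : Fin m → ℝ) i = k * r := fun i => by
  by_cases h : i = j
  · subst h; exact ⟨1, by simp⟩
  · exact ⟨0, by simp [h]⟩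

/-- A function killed by `∂_{z_j}` does not depend on `z_j`. -/
lemma const_along_Z {φ : HS m} {j : Fin m} (h : ZL j φ = 0) (q : Pt m) (s : ℝ) :
    (φ : Pt m → ℂ) (q + s • eZ m j) = (φ : Pt m → ℂ) q := by
  have hd : ∀ t : ℝ, HasDerivAt (fun t : ℝ => (φ : Pt m → ℂ) (q + t • eZ m j)) 0 t := fun t => by
    have hl : HasDerivAt (fun t : ℝ => q + t • eZ m j) (eZ m j) t := by
      simpa using ((hasDerivAt_id t).smul_const (eZ m j)).const_add q
    have h1 := (diff_at φ.2.1 (q + t • eZ m j)).hasFDerivAt.comp_hasDerivAt t hl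
    have h2 : fderiv ℝ (φ : Pt m → ℂ) (q + t • eZ m j) (eZ m j) = 0 :=
      congrFun (congrArg Subtype.val h) _
    rwa [h2] at h1
  have := is_const_of_deriv_eq_zero (fun t => (hd t).differentiableAt) (fun t => (hd t).deriv) s 0
  simpa using this

lemma exists_Z_mode (j : Fin m) (φ : HS m) (hφ : φ ≠ 0) :
    ∃ (k : ℤ) (ψ : HS m), ψ ≠ 0 ∧ SameModes φ ψ ∧ ZL j ψ = (Complex.I * (k : ℂ)) • ψ := by
  obtain ⟨k, ψ, h1, h2, h3⟩ := exists_projection (L := 2 * π) (v := eZ m j) φ hφ (by positivity)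
    (fun q => by
      rw [← φ.2.2 0 0 (Pi.single j (2 * π)) ⟨inGamma_zero.1, inGamma_zero.2.1, single_int j _⟩ q]
      refine congrArg (φ : Pt m → ℂ) (Prod.ext ?_ (Prod.ext ?_ ?_)) <;> funext i
      · simp [heisAct, eZ]
      · simp [heisAct, eZ]
      · simp only [heisAct, eZ, Prod.snd_add, Pi.add_apply, Prod.smul_snd, Pi.smul_apply]
        by_cases h : i = j
        · subst h; simp; ring
        · simp [h])
    (fun i => Or.inl rfl)
    (fun a b c _ q t => by
      rw [heisAct_line]
      refine congrArg (fun w : Pt m => (φ : Pt m → ℂ) (heisAct a b c q + t • w))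
        (Prod.ext rfl (Prod.ext rfl ?_))
      funext i; simp [eZ])
  refine ⟨k, ψ, h1, h2, Subtype.ext (funext fun q => ?_)⟩
  have := h3 q
  rw [mul_div_assoc, div_self (by positivity), mul_one] at this
  rw [Complex.ofReal_intCast] at this
  exact this

lemma two_pi_div_sqrt : 2 * π / Real.sqrt (2 * π) = Real.sqrt (2 * π) := Real.div_sqrt

lemma exists_X_mode (j : Fin m) (φ : HS m) (hφ : φ ≠ 0) (hZ : ZL j φ = 0) :
    ∃ (k : ℤ) (ψ : HS m), ψ ≠ 0 ∧ SameModes φ ψ ∧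
      XL j ψ = (Complex.I * ((k * Real.sqrt (2 * π) : ℝ) : ℂ)) • ψ := by
  obtain ⟨k, ψ, h1, h2, h3⟩ := exists_projection (L := Real.sqrt (2 * π)) (v := eX m j) φ hφ
    sqrt_two_pi_pos
    (fun q => by
      rw [← φ.2.2 (Pi.single j (Real.sqrt (2 * π))) 0 0
        ⟨single_int j _, inGamma_zero.2.1, inGamma_zero.2.2⟩ q,
        ← const_along_Z hZ _ (-(Real.sqrt (2 * π) * q.2.1 j))]
      refine congrArg (φ : Pt m → ℂ) (Prod.ext ?_ (Prod.ext ?_ ?_)) <;> funext i <;>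
        simp only [heisAct, eX, eZ, Prod.fst_add, Prod.snd_add, Pi.add_apply, Prod.smul_snd,
          Prod.smul_fst, Pi.smul_apply]
      · by_cases h : i = j
        · subst h; simp; ring
        · simp [h]
      · simp
      · by_cases h : i = j
        · subst h; simp; ring
        · simp [h])
    (fun i => by
      by_cases h : i = j
      · subst h; exact Or.inr hZ
      · left; simp [eX, h])
    (fun a b c _ q t => by
      rw [heisAct_line]
      refine congrArg (fun w : Pt m => (φ : Pt m → ℂ) (heisAct a b c q + t • w))
        (Prod.ext rfl (Prod.ext rfl ?_))
      funext i; simp [eX])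
  refine ⟨k, ψ, h1, h2, Subtype.ext (funext fun q => ?_)⟩
  have := h3 q
  rw [mul_div_assoc, two_pi_div_sqrt] at this
  exact this

lemma exists_Y_mode (j : Fin m) (φ : HS m) (hφ : φ ≠ 0) (hZ : ZL j φ = 0) :
    ∃ (k : ℤ) (ψ : HS m), ψ ≠ 0 ∧ SameModes φ ψ ∧
      YL j ψ = (Complex.I * ((k * Real.sqrt (2 * π) : ℝ) : ℂ)) • ψ := by
  obtain ⟨k, ψ, h1, h2, h3⟩ := exists_projection (L := Real.sqrt (2 * π)) (v := eY m j) φ hφ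
    sqrt_two_pi_pos
    (fun q => by
      rw [← φ.2.2 0 (Pi.single j (Real.sqrt (2 * π))) 0
        ⟨inGamma_zero.1, single_int j _, inGamma_zero.2.2⟩ q]
      refine congrArg (φ : Pt m → ℂ) (Prod.ext ?_ (Prod.ext ?_ ?_)) <;> funext i <;>
        simp only [heisAct, eY, Prod.fst_add, Prod.snd_add, Pi.add_apply, Prod.smul_snd,
          Prod.smul_fst, Pi.smul_apply]
      · simp
      · by_cases h : i = j
        · subst h; simp; ring
        · simp [h]
      · simp)
    (fun i => Or.inl rfl)
    (fun a b c _ q t => by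
      rw [heisAct_line, ← const_along_Z hZ _ (-(t * a j))]
      refine congrArg (φ : Pt m → ℂ) (Prod.ext ?_ (Prod.ext ?_ ?_)) <;> funext i <;>
        simp only [eY, eZ, Prod.fst_add, Prod.snd_add, Pi.add_apply, Prod.smul_snd,
          Prod.smul_fst, Pi.smul_apply, Pi.sub_apply]
      · simp
      · simp
      · by_cases h : i = j
        · subst h; simp
        · simp [h])
  have hZψ : ZL j ψ = 0 := by
    have := ((h2 0).1 j).2.2 (by rw [hZ, zero_smul])
    rwa [zero_smul] at this
  refine ⟨k, ψ, h1, h2, Subtype.ext (funext fun q => ?_)⟩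
  have := h3 q
  rw [mul_div_assoc, two_pi_div_sqrt] at this
  have h4 : fderiv ℝ (ψ : Pt m → ℂ) q (eZ m j) = 0 := congrFun (congrArg Subtype.val hZψ) q
  show Yop j ψ q = _
  rw [Yop, h4, this]
  simp

/-- Performing a projection step for all indices in turn. -/
lemma iterate_steps {ι : Type} [Inhabited ι] (φ₀ : HS m) (h₀ : φ₀ ≠ 0)
    (Q : Fin m → ι → HS m → Prop)
    (hpres : ∀ j k φ ψ, Q j k φ → SameModes φ ψ → Q j k ψ)
    (hstep : ∀ j φ, SameModes φ₀ φ → φ ≠ 0 → ∃ (k : ι) (ψ : HS m), ψ ≠ 0 ∧ SameModes φ ψ ∧ Q j k ψ) :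
    ∃ (k : Fin m → ι) (ψ : HS m), ψ ≠ 0 ∧ SameModes φ₀ ψ ∧ ∀ j, Q j (k j) ψ := by
  suffices H : ∀ s : Finset (Fin m), ∃ (k : Fin m → ι) (ψ : HS m), ψ ≠ 0 ∧ SameModes φ₀ ψ ∧
      ∀ j ∈ s, Q j (k j) ψ by
    obtain ⟨k, ψ, h1, h2, h3⟩ := H Finset.univ
    exact ⟨k, ψ, h1, h2, fun j => h3 j (Finset.mem_univ j)⟩
  intro s
  induction s using Finset.induction_on with
  | empty => exact ⟨fun _ => default, φ₀, h₀, SameModes.refl _, by simp⟩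
  | insert j s hj ih =>
    obtain ⟨k, ψ, h1, h2, h3⟩ := ih
    obtain ⟨k', χ, h4, h5, h6⟩ := hstep j ψ h2 h1
    refine ⟨Function.update k j k', χ, h4, h2.trans h5, fun i hi => ?_⟩
    by_cases hij : i = j
    · subst hij; simpa using h6
    · rw [Function.update_of_ne hij]
      exact hpres _ _ _ _ (h3 i ((Finset.mem_insert.1 hi).resolve_left hij)) h5

lemma spectrum_subset (lam : ℝ) (φ₀ : HS m) (h₀ : φ₀ ≠ 0)
    (hD : ∑ j, DL j φ₀ = (-(lam : ℂ)) • φ₀) :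
    ∃ (J : Finset (Fin m)) (n : Fin m → ℕ) (α : Fin m → ℤ) (k l : Fin m → ℤ),
      (∀ j ∈ J, α j ≠ 0) ∧
      lam = (∑ j ∈ J, (2 * (n j : ℝ) + 1) * |(α j : ℝ)|) +
        2 * π * ∑ i ∈ Jᶜ, ((k i : ℝ) ^ 2 + (l i : ℝ) ^ 2) := by
  obtain ⟨α, φ₁, h1, h2, h3⟩ := iterate_steps φ₀ h₀
    (fun j (k : ℤ) φ => ZL j φ = (Complex.I * (k : ℂ)) • φ)
    (fun j k φ ψ h ht => ((ht _).1 j).2.2 h) (fun j φ _ h => exists_Z_mode j φ h)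
  obtain ⟨kl, φ₂, h4, h5, h6⟩ := iterate_steps φ₁ h1
    (fun j (kl : ℤ × ℤ) φ => α j = 0 →
      XL j φ = (Complex.I * ((kl.1 * Real.sqrt (2 * π) : ℝ) : ℂ)) • φ ∧
      YL j φ = (Complex.I * ((kl.2 * Real.sqrt (2 * π) : ℝ) : ℂ)) • φ)
    (fun j k φ ψ h ht h0 => ⟨((ht _).1 j).1 (h h0).1, ((ht _).1 j).2.1 (h h0).2⟩)
    (fun j φ ht hφ => by
      by_cases hα : α j = 0
      · have hZ : ∀ ψ, SameModes φ₁ ψ → ZL j ψ = 0 := fun ψ hψ => by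
          have := ((hψ _).1 j).2.2 (h3 j)
          simpa [hα] using this
        obtain ⟨k, ψ, g1, g2, g3⟩ := exists_X_mode j φ hφ (hZ φ ht)
        obtain ⟨l, χ, g4, g5, g6⟩ := exists_Y_mode j ψ g1 (hZ ψ (ht.trans g2))
        exact ⟨(k, l), χ, g4, g2.trans g5, fun _ => ⟨((g5 _).1 j).1 g3, g6⟩⟩
      · exact ⟨(0, 0), φ, hφ, SameModes.refl _, fun h => absurd h hα⟩)
  obtain ⟨N, hN⟩ := exists_nat_gt lam
  obtain ⟨n, hn⟩ := eigenvalue_form α (fun j => (kl j).1) (fun j => (kl j).2) N lam φ₂ hN h4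
    (((h2.trans h5) _).2 hD) (fun j => ((h5 _).1 j).2.2 (h3 j)) h6
  exact ⟨_, n, α, _, _, fun j hj => (Finset.mem_filter.1 hj).2, hn⟩

end Reduction

/-! ### Ground states from theta functions -/

section GroundState

open Complex (I)

variable {m : ℕ}

/-- A smooth function `g` on one Heisenberg factor, with first derivatives `gx`, `gy` and
`∂_z g = i a g`, invariant under generators of `Γ` and nonzero at the origin. By `mode`, either `g` is killed by the ladder
operator `X + iY`, or it is a joint eigenfunction of `X` and `Y`; in both cases `μ` is
the resulting eigenvalue of `-(X² + Y²)`. -/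
structure IsFactor (a μ : ℝ) (g gx gy : ℝ → ℝ → ℝ → ℂ) : Prop where
  smooth : ContDiff ℝ (⊤ : ℕ∞) (fun p : ℝ × ℝ × ℝ => g p.1 p.2.1 p.2.2)
  dx : ∀ x y z, HasDerivAt (fun t : ℝ => g (x + t) y z) (gx x y z) 0
  dy : ∀ x y z, HasDerivAt (fun t : ℝ => g x (y + t) z) (gy x y z) 0
  dz : ∀ x y z, HasDerivAt (fun t : ℝ => g x y (z + t)) (I * a * g x y z) 0
  stepX : ∀ x y z, g (x + √(2 * π)) y (z - √(2 * π) * y) = g x y z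
  stepY : ∀ x y z, g x (y + √(2 * π)) z = g x y z
  stepZ : ∀ x y z, g x y (z + 2 * π) = g x y z
  ne : g 0 0 0 ≠ 0
  mode : ((∀ x y z, gx x y z + I * (gy x y z - x * (I * a * g x y z)) = 0) ∧ μ = a) ∨
    ∃ k l : ℝ, (∀ x y z, gx x y z = I * k * g x y z ∧
      gy x y z - x * (I * a * g x y z) = I * l * g x y z) ∧ μ = k ^ 2 + l ^ 2

lemma IsFactor.periodic {a μ : ℝ} {g gx gy : ℝ → ℝ → ℝ → ℂ} (h : IsFactor a μ g gx gy)
    (i j k : ℤ) (x y z : ℝ) :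
    g (i * √(2 * π) + x) (j * √(2 * π) + y) (k * (2 * π) + z - i * √(2 * π) * y) = g x y z := by
  have hx : ∀ (i : ℤ) (x y z : ℝ), g (x + i * √(2 * π)) y (z - i * √(2 * π) * y) = g x y z := by
    intro i
    induction i using Int.induction_on with
    | zero => intro x y z; simp
    | succ n ih =>
      intro x y z
      rw [← ih x y z, ← h.stepX (x + ((n : ℕ) : ℤ) * √(2 * π))]
      push_cast
      congr 1 <;> ring
    | pred n ih =>
      intro x y z
      rw [← ih x y z, ← h.stepX (x + _)]
      push_cast
      congr 1 <;> ring
  have hy : ∀ x y z, g x (y + j * √(2 * π)) z = g x y z := fun x y z =>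
    Function.Periodic.int_mul (f := fun y => g x y z) (fun y => h.stepY x y z) j y
  have hz : ∀ x y z, g x y (z + k * (2 * π)) = g x y z := fun x y z =>
    Function.Periodic.int_mul (f := fun z => g x y z) (fun z => h.stepZ x y z) k z
  rw [← hx i x y z, ← hy _ y, ← hz _ _ (z - _)]
  congr 1 <;> ring

/-- The product over all Heisenberg factors of functions of a single factor. -/
def prodFun (g : Fin m → ℝ → ℝ → ℝ → ℂ) (q : Pt m) : ℂ :=
  ∏ i, g i (q.1 i) (q.2.1 i) (q.2.2 i)

/-- The product with the `j`-th factor omitted. -/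
def restFun (g : Fin m → ℝ → ℝ → ℝ → ℂ) (j : Fin m) (q : Pt m) : ℂ :=
  ∏ i ∈ Finset.univ.erase j, g i (q.1 i) (q.2.1 i) (q.2.2 i)

lemma prodFun_eq (g : Fin m → ℝ → ℝ → ℝ → ℂ) (j : Fin m) (q : Pt m) :
    prodFun g q = restFun g j q * g j (q.1 j) (q.2.1 j) (q.2.2 j) :=
  (Finset.prod_erase_mul _ _ (Finset.mem_univ j)).symm

lemma restFun_congr (g : Fin m → ℝ → ℝ → ℝ → ℂ) (j : Fin m) {q q' : Pt m}
    (h : ∀ i, i ≠ j → q'.1 i = q.1 i ∧ q'.2.1 i = q.2.1 i ∧ q'.2.2 i = q.2.2 i) :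
    restFun g j q' = restFun g j q :=
  Finset.prod_congr rfl fun i hi => by
    obtain ⟨h1, h2, h3⟩ := h i (Finset.ne_of_mem_erase hi)
    rw [h1, h2, h3]

lemma D_of_hasDerivAt {φ : Pt m → ℂ} (hφ : ContDiff ℝ (⊤ : ℕ∞) φ) {q w : Pt m} {d : ℂ}
    (h : HasDerivAt (fun t : ℝ => φ (q + t • w)) d 0) : fderiv ℝ φ q w = d := by
  rw [D_eq_lineDeriv hφ, lineDeriv, h.deriv]

/-- A product of one-factor functions is a joint eigenfunction of all `∂_{z_j}` and `Δ_j`. -/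
lemma exists_base {a μ : Fin m → ℝ} {g gx gy : Fin m → ℝ → ℝ → ℝ → ℂ}
    (h : ∀ j, IsFactor (a j) (μ j) (g j) (gx j) (gy j)) :
    ∃ φ : HS m, φ ≠ 0 ∧ (∀ j, ZL j φ = (I * (a j : ℂ)) • φ) ∧
      ∀ j, DL j φ = (-(μ j : ℂ)) • φ := by
  have hs : ContDiff ℝ (⊤ : ℕ∞) (prodFun g) :=
    contDiff_prod fun i _ => (h i).smooth.comp
      (g := fun p : ℝ × ℝ × ℝ => g i p.1 p.2.1 p.2.2)
      (f := fun q : Pt m => (q.1 i, q.2.1 i, q.2.2 i)) (by fun_prop)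
  have hp : GPeriodic (prodFun g) := by
    rintro A B C ⟨hA, hB, hC⟩ q
    refine Finset.prod_congr rfl fun i _ => ?_
    obtain ⟨k1, h1⟩ := hA i
    obtain ⟨k2, h2⟩ := hB i
    obtain ⟨k3, h3⟩ := hC i
    simp only [heisAct, h1, h2, h3]
    exact (h i).periodic k1 k2 k3 _ _ _
  have hX : ∀ j q, fderiv ℝ (prodFun g) q (eX m j)
      = restFun g j q * gx j (q.1 j) (q.2.1 j) (q.2.2 j) := by
    intro j q
    refine D_of_hasDerivAt hs ?_
    refine (((h j).dx (q.1 j) (q.2.1 j) (q.2.2 j)).const_mul (restFun g j q)).congr_of_eventuallyEq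
      (Eventually.of_forall fun t => ?_)
    show prodFun g (q + t • eX m j) = _
    rw [prodFun_eq g j, restFun_congr g j (q := q) (fun i hi => by simp [eX, hi])]
    simp [eX]
  have hY : ∀ j q, fderiv ℝ (prodFun g) q (eY m j)
      = restFun g j q * gy j (q.1 j) (q.2.1 j) (q.2.2 j) := by
    intro j q
    refine D_of_hasDerivAt hs ?_
    refine (((h j).dy (q.1 j) (q.2.1 j) (q.2.2 j)).const_mul (restFun g j q)).congr_of_eventuallyEq
      (Eventually.of_forall fun t => ?_)
    show prodFun g (q + t • eY m j) = _
    rw [prodFun_eq g j, restFun_congr g j (q := q) (fun i hi => by simp [eY, hi])]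
    simp [eY]
  have hZ : ∀ j q, fderiv ℝ (prodFun g) q (eZ m j)
      = restFun g j q * (I * a j * g j (q.1 j) (q.2.1 j) (q.2.2 j)) := by
    intro j q
    refine D_of_hasDerivAt hs ?_
    refine (((h j).dz (q.1 j) (q.2.1 j) (q.2.2 j)).const_mul (restFun g j q)).congr_of_eventuallyEq
      (Eventually.of_forall fun t => ?_)
    show prodFun g (q + t • eZ m j) = _
    rw [prodFun_eq g j, restFun_congr g j (q := q) (fun i hi => by simp [eZ, hi])]
    simp [eZ]
  set φ : HS m := ⟨prodFun g, hs, hp⟩ with hφ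
  have hZφ : ∀ j, ZL j φ = (I * (a j : ℂ)) • φ := fun j => Subtype.ext <| funext fun q => by
    show fderiv ℝ (prodFun g) q (eZ m j) = I * (a j : ℂ) * prodFun g q
    rw [hZ, prodFun_eq g j]; ring
  have hYop : ∀ j q, Yop j (prodFun g) q = restFun g j q * (gy j (q.1 j) (q.2.1 j) (q.2.2 j)
      - (q.1 j : ℂ) * (I * a j * g j (q.1 j) (q.2.1 j) (q.2.2 j))) := fun j q => by
    rw [Yop, hY, hZ]; ring
  refine ⟨φ, fun h0 => ?_, hZφ, fun j => ?_⟩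
  · have : prodFun g 0 = 0 := congrFun (congrArg Subtype.val h0) 0
    exact (Finset.prod_ne_zero_iff.2 fun i _ => (h i).ne) this
  · rcases (h j).mode with ⟨h1, h2⟩ | ⟨k, l, h1, h2⟩
    · have hA : AL I j φ = 0 := Subtype.ext <| funext fun q => by
        show fderiv ℝ (prodFun g) q (eX m j) + I * Yop j (prodFun g) q = 0
        rw [hX, hYop]
        linear_combination restFun g j q * h1 (q.1 j) (q.2.1 j) (q.2.2 j)
      have hD := AL_AL (s := I) (by simp) j φ
      rw [hA, map_zero, hZφ, smul_smul] at hD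
      rw [sub_eq_zero.1 hD.symm, h2, ← mul_assoc, Complex.I_mul_I, neg_one_mul]
    · have e1 : XL j φ = (I * (k : ℂ)) • φ := Subtype.ext <| funext fun q => by
        show fderiv ℝ (prodFun g) q (eX m j) = I * (k : ℂ) * prodFun g q
        rw [hX, prodFun_eq g j, (h1 _ _ _).1]; ring
      have e2 : YL j φ = (I * (l : ℂ)) • φ := Subtype.ext <| funext fun q => by
        show Yop j (prodFun g) q = I * (l : ℂ) * prodFun g q
        rw [hYop, prodFun_eq g j, (h1 _ _ _).2]; ring
      rw [DL_eq, e1, e2, map_smul, map_smul, e1, e2, smul_smul, smul_smul, ← add_smul, h2]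
      congr 1
      push_cast
      linear_combination ((k : ℂ) ^ 2 + (l : ℂ) ^ 2) * Complex.I_mul_I

lemma sqrt_two_pi_sq : ((√(2 * π) : ℝ) : ℂ) ^ 2 = 2 * π := by
  rw [← Complex.ofReal_pow, Real.sq_sqrt (by positivity)]; push_cast; rfl

lemma exp_period (n : ℤ) (w : ℂ) : Complex.exp (w + I * n * (2 * π)) = Complex.exp w := by
  rw [Complex.exp_eq_exp_iff_exists_int]
  exact ⟨n, by ring⟩

/-- Plane waves on the torus quotient. -/
lemma isFactor_wave (k l : ℤ) :
    ∃ g gx gy, IsFactor 0 (2 * π * ((k : ℝ) ^ 2 + (l : ℝ) ^ 2)) g gx gy := by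
  set r : ℝ := √(2 * π) with hr
  have hr2 := sqrt_two_pi_sq
  rw [← hr] at hr2
  let g : ℝ → ℝ → ℝ → ℂ := fun x y _ => Complex.exp (I * r * (k * x + l * y))
  refine ⟨g, fun x y z => I * ((k * r : ℝ) : ℂ) * g x y z,
    fun x y z => I * ((l * r : ℝ) : ℂ) * g x y z, ?_, fun x y z => ?_, fun x y z => ?_,
    fun x y z => ?_, fun x y z => ?_, fun x y z => ?_, fun x y z => ?_, ?_, Or.inr
      ⟨k * r, l * r, fun x y z => ⟨rfl, by simp⟩, ?_⟩⟩
  · refine Complex.contDiff_exp.comp ?_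
    have h1 : ContDiff ℝ (⊤ : ℕ∞) (fun p : ℝ × ℝ × ℝ => (p.1 : ℂ)) :=
      Complex.ofRealCLM.contDiff.comp (by fun_prop)
    have h2 : ContDiff ℝ (⊤ : ℕ∞) (fun p : ℝ × ℝ × ℝ => (p.2.1 : ℂ)) :=
      Complex.ofRealCLM.contDiff.comp (by fun_prop)
    fun_prop
  · have h0 : HasDerivAt (fun t : ℝ => (t : ℂ)) 1 0 := Complex.ofRealCLM.hasDerivAt
    have h1 := ((((h0.const_add (x : ℂ)).const_mul (k : ℂ)).add_const ((l : ℂ) * y)).const_mul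
      (I * r)).cexp
    convert h1 using 1
    · funext t; simp [g]
    · simp [g]; ring
  · have h0 : HasDerivAt (fun t : ℝ => (t : ℂ)) 1 0 := Complex.ofRealCLM.hasDerivAt
    have h1 := ((((h0.const_add (y : ℂ)).const_mul (l : ℂ)).const_add ((k : ℂ) * x)).const_mul
      (I * r)).cexp
    convert h1 using 1
    · funext t; simp [g]
    · simp [g]; ring
  · simpa [g] using hasDerivAt_const (0 : ℝ) (g x y z)
  · simp only [g]
    rw [← exp_period k (I * r * (k * x + l * y)), ← hr, ← hr2]
    congr 1; push_cast; ring
  · simp only [g]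
    rw [← exp_period l (I * r * (k * x + l * y)), ← hr, ← hr2]
    congr 1; push_cast; ring
  · rfl
  · exact Complex.exp_ne_zero _
  · rw [mul_pow, mul_pow, hr, Real.sq_sqrt (by positivity)]; ring

/-- On the imaginary axis the theta constant is a sum of positive terms. -/
lemma theta_zero_ne {a : ℝ} (ha : 0 < a) : jacobiTheta₂ 0 (I * a) ≠ 0 := by
  have him : 0 < (I * (a : ℂ)).im := by simpa using ha
  have hs := hasSum_jacobiTheta₂_term 0 him
  have ht : ∀ n : ℤ, jacobiTheta₂_term n 0 (I * a) = ((Real.exp (-π * n ^ 2 * a) : ℝ) : ℂ) := by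
    intro n
    rw [jacobiTheta₂_term, Complex.ofReal_exp]
    congr 1
    push_cast
    linear_combination (π * n ^ 2 * a : ℂ) * Complex.I_mul_I
  simp_rw [ht] at hs
  have hs' : Summable fun n : ℤ => Real.exp (-π * n ^ 2 * a) := Complex.summable_ofReal.1 hs.summable
  rw [← hs.tsum_eq, ← Complex.ofReal_tsum, Complex.ofReal_ne_zero]
  exact (hs'.tsum_pos (fun n => (Real.exp_pos _).le) 0 (Real.exp_pos _)).ne'

/-- The theta function ground state of central frequency `a`: it is annihilated by `X + iY`. -/
lemma isFactor_theta {a : ℕ} (ha : 0 < a) : ∃ g gx gy, IsFactor a a g gx gy := by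
  set r : ℝ := √(2 * π) with hr
  have hr2 := sqrt_two_pi_sq
  rw [← hr] at hr2
  have hr0 : (r : ℂ) ≠ 0 := Complex.ofReal_ne_zero.2 sqrt_two_pi_pos.ne'
  set τ : ℂ := I * ((a : ℝ) : ℂ) with hτ
  have him : 0 < τ.im := by simpa [hτ] using ha
  let θ : ℂ → ℂ := fun u => jacobiTheta₂ u τ
  have hθ : Differentiable ℂ θ := fun u => differentiableAt_jacobiTheta₂_fst u him
  have hθ' : ContDiff ℝ (⊤ : ℕ∞) θ := hθ.contDiff.restrict_scalars ℝ
  let E : ℝ → ℝ → ℂ := fun x z => Complex.exp (I * a * z - a * x ^ 2 / 2)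
  let u : ℝ → ℝ → ℂ := fun x y => a / r * (y - I * x)
  let g : ℝ → ℝ → ℝ → ℂ := fun x y z => E x z * θ (u x y)
  have h0 : HasDerivAt (fun t : ℝ => (t : ℂ)) 1 0 := Complex.ofRealCLM.hasDerivAt
  refine ⟨g, fun x y z => -a * x * g x y z - I * (a / r) * (E x z * deriv θ (u x y)),
    fun x y z => a / r * (E x z * deriv θ (u x y)), ?_, fun x y z => ?_, fun x y z => ?_,
    fun x y z => ?_, fun x y z => ?_, fun x y z => ?_, fun x y z => ?_, ?_, Or.inl
      ⟨fun x y z => ?_, rfl⟩⟩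
  · have h1 : ContDiff ℝ (⊤ : ℕ∞) (fun p : ℝ × ℝ × ℝ => (p.1 : ℂ)) :=
      Complex.ofRealCLM.contDiff.comp (by fun_prop)
    have h2 : ContDiff ℝ (⊤ : ℕ∞) (fun p : ℝ × ℝ × ℝ => (p.2.1 : ℂ)) :=
      Complex.ofRealCLM.contDiff.comp (by fun_prop)
    have h3 : ContDiff ℝ (⊤ : ℕ∞) (fun p : ℝ × ℝ × ℝ => (p.2.2 : ℂ)) :=
      Complex.ofRealCLM.contDiff.comp (by fun_prop)
    have hE : ContDiff ℝ (⊤ : ℕ∞) (fun p : ℝ × ℝ × ℝ => E p.1 p.2.2) :=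
      Complex.contDiff_exp.comp (by fun_prop)
    exact hE.mul (hθ'.comp (contDiff_const.mul (h2.sub (contDiff_const.mul h1))))
  · have h1 := ((((h0.const_add (x : ℂ)).pow 2).const_mul ((a : ℂ) / 2)).const_sub
      (I * a * z)).cexp
    have h2 := (((h0.const_add (x : ℂ)).const_mul I).const_sub (y : ℂ)).const_mul ((a : ℂ) / r)
    have h3 := (hθ _).hasDerivAt.comp (0 : ℝ) h2
    refine ((h1.mul h3).congr_deriv ?_).congr_of_eventuallyEq (Eventually.of_forall fun t => ?_)
    · simp [g, E, u]; ring_nf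
    · simp [g, E, u]; left; ring_nf
  · have h2 := ((h0.const_add (y : ℂ)).sub_const (I * x)).const_mul ((a : ℂ) / r)
    have h3 := (hθ _).hasDerivAt.comp (0 : ℝ) h2
    refine ((h3.const_mul (E x z)).congr_deriv ?_).congr_of_eventuallyEq
      (Eventually.of_forall fun t => ?_)
    · simp [u]; ring
    · simp [g, u]
  · have h1 := (((h0.const_add (z : ℂ)).const_mul (I * a)).sub_const ((a : ℂ) * x ^ 2 / 2)).cexp
    refine ((h1.mul_const (θ (u x y))).congr_deriv ?_).congr_of_eventuallyEq
      (Eventually.of_forall fun t => ?_)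
    · simp [g, E]; ring
    · simp [g, E]
  · have e1 : u (x + r) y = u x y - τ := by
      simp only [u, hτ]; push_cast; field_simp; ring
    have e2 := jacobiTheta₂_add_left' (u x y - τ) τ
    rw [sub_add_cancel] at e2
    show E (x + r) (z - r * y) * jacobiTheta₂ (u (x + r) y) τ = E x z * jacobiTheta₂ (u x y) τ
    rw [e1, e2, ← mul_assoc]
    congr 1
    simp only [E]
    rw [← Complex.exp_add]
    congr 1
    have e3 : (π : ℂ) * u x y * 2 = r * a * (y - I * x) := by
      simp only [u]; field_simp; rw [hr2]; ring
    simp only [hτ]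
    push_cast
    linear_combination (-(a : ℂ) / 2) * hr2 + I * e3 + (-(r * a * x) - π * a) * Complex.I_mul_I
  · have e1 : u x (y + r) = u x y + a * 1 := by
      simp only [u]; push_cast; field_simp; ring
    show E x z * θ (u x (y + r)) = E x z * θ (u x y)
    rw [e1]
    congr 1
    exact Function.Periodic.nat_mul (f := θ) (fun w => jacobiTheta₂_add_left w τ) a _
  · show E x (z + 2 * π) * θ (u x y) = E x z * θ (u x y)
    congr 1
    simp only [E]
    rw [← exp_period a (I * a * z - a * x ^ 2 / 2)]
    congr 1; push_cast; ring
  · have := theta_zero_ne (a := a) (by exact_mod_cast ha)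
    refine mul_ne_zero (Complex.exp_ne_zero _) ?_
    simpa [θ, u, hτ] using this
  · push_cast
    linear_combination (-(a : ℂ) * x * g x y z) * Complex.I_mul_I

lemma subset_spectrum (J : Finset (Fin m)) (n : Fin m → ℕ) (α k l : Fin m → ℤ)
    (hα : ∀ j ∈ J, α j ≠ 0) :
    ∃ φ : HS m, φ ≠ 0 ∧ ∑ j, DL j φ = (-(((∑ j ∈ J, (2 * (n j : ℝ) + 1) * |(α j : ℝ)|) +
        2 * π * ∑ i ∈ Jᶜ, ((k i : ℝ) ^ 2 + (l i : ℝ) ^ 2) : ℝ) : ℂ)) • φ := by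
  classical
  let a : Fin m → ℝ := fun j => if j ∈ J then ((α j).natAbs : ℝ) else 0
  let μ : Fin m → ℝ := fun j => if j ∈ J then ((α j).natAbs : ℝ)
    else 2 * π * ((k j : ℝ) ^ 2 + (l j : ℝ) ^ 2)
  have hf : ∀ j, ∃ g gx gy, IsFactor (a j) (μ j) g gx gy := fun j => by
    by_cases hj : j ∈ J
    · simpa only [a, μ, hj, if_true] using isFactor_theta (Int.natAbs_pos.2 (hα j hj))
    · simpa only [a, μ, hj, if_false] using isFactor_wave (k j) (l j)
  choose g gx gy hg using hf
  obtain ⟨φ, h1, -, h3⟩ := exists_raised (α := a) (μ₀ := μ)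
    (fun j => by simp only [a]; split_ifs <;> positivity)
    (fun j => by simp only [μ]; split_ifs <;> positivity)
    (exists_base hg) _ (fun j => if j ∈ J then n j else 0) rfl (fun j hj => by
      have hJ : j ∈ J := by by_contra h; simp [h] at hj
      simp only [a, hJ, if_true]
      exact_mod_cast Int.natAbs_pos.2 (hα j hJ))
  refine ⟨φ, h1, ?_⟩
  simp_rw [h3]
  rw [← Finset.sum_smul, Finset.sum_neg_distrib, ← Complex.ofReal_sum,
    ← Finset.sum_add_sum_compl J, Finset.mul_sum]
  congr 4
  · refine Finset.sum_congr rfl fun j hj => ?_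
    simp only [a, μ, hj, if_true, Nat.cast_natAbs, Int.cast_abs]
    ring
  · refine Finset.sum_congr rfl fun j hj => ?_
    simp [a, μ, Finset.mem_compl.1 hj]

end GroundState

/-- The spectrum of the sub-Laplacian Δ on the product 𝐇^m
(Section 5.2 of the paper). -/
theorem product_heisenberg_spectrum (m : ℕ) (hm : 1 ≤ m) (lam : ℝ) :
    (∃ φ : Pt m → ℂ, φ ≠ 0 ∧ ContDiff ℝ (⊤ : ℕ∞) φ ∧ GPeriodic φ ∧
      ∀ q, -Delta φ q = (lam : ℂ) * φ q) ↔
    (∃ (J : Finset (Fin m)) (n : Fin m → ℕ) (α : Fin m → ℤ) (k l : Fin m → ℤ),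
      (∀ j ∈ J, α j ≠ 0) ∧
      lam = (∑ j ∈ J, (2 * (n j : ℝ) + 1) * |(α j : ℝ)|) +
        2 * π * ∑ i ∈ Jᶜ, ((k i : ℝ) ^ 2 + (l i : ℝ) ^ 2)) := by
  constructor
  · rintro ⟨φ, h0, hs, hp, he⟩
    let ψ : HS m := ⟨φ, hs, hp⟩
    refine spectrum_subset lam ψ (fun h => h0 (congrArg Subtype.val h))
      (Subtype.ext (funext fun q => ?_))
    rw [Delta_eq]
    show Delta φ q = -(lam : ℂ) * φ q
    rw [neg_mul, ← he q, neg_neg]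
  · rintro ⟨J, n, α, k, l, hα, rfl⟩
    obtain ⟨φ, h0, hD⟩ := subset_spectrum J n α k l hα
    refine ⟨φ, fun h => h0 (Subtype.ext h), φ.2.1, φ.2.2, fun q => ?_⟩
    rw [← Delta_eq, hD]
    rw [Submodule.coe_smul, Pi.smul_apply, smul_eq_mul, neg_mul, neg_neg]
end
end

section
/- Let L ≥ 1 be an integer and, for each ℓ ∈ {1,…,L}, let J_ℓ ≥ 1 be an integer, let n^ℓ_1, …, n^ℓ_{J_ℓ} ∈ ℕ and set m^ℓ_j = 2n^ℓ_j + 1, and let r^ℓ_1, …, r^ℓ_{J_ℓ} be positive real numbers. Then there exist a strictly increasing sequence of positive integers (N_k)_k and, for every ℓ and every j ∈ {1,…,J_ℓ}, sequences of positive integers (α^ℓ_{j,k})_k with α^ℓ_{j,k} → +∞ as k → ∞, such that ∑_{j=1}^{J_ℓ} m^ℓ_j · α^ℓ_{j,k} = N_k for every ℓ and every k, and α^ℓ_{j,k} / α^ℓ_{j',k} → r^ℓ_j / r^ℓ_{j'} as k → ∞ for all ℓ, j, j'. (The Diophantine adjustment used in the proofs of the paper's Lemmas 4.4 and 4.5 and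 of Theorem 1.10 to produce, for each k, eigenfunctions in different harmonic-oscillator blocks sharing the same eigenvalue ∑_j (2n_j+1)α_j while prescribing the limiting ratios of the Fourier frequencies α_j.) -/
/-!
Let `M` be a common multiple of all the weights `m ℓ j = 2 * n ℓ j + 1`, and aim for the value
`N = M * t`. Writing `α ℓ j = (M / m ℓ j) * β ℓ j`, the equation `∑ j, m ℓ j * α ℓ j = M * t`
becomes `∑ j, β ℓ j = t`, so in each block it remains to split the integer `t` into natural numbers
with asymptotic proportions `p j = m j * r j / ∑ i, m i * r i`. Rounding `p j * t` down for all
indices but one and giving the rest to the remaining index does this (`exists_nat_split`).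
Then `α ℓ j / t → C * r ℓ j` with a constant `C > 0` depending only on the block
(`exists_block_solution`), which gives the ratios and the divergence. There are finitely many
indices, so all `α ℓ j` are positive from some `t = T` on; the sequence starts after `T`.
-/

open Filter Topology

/-- Every natural number `t` can be split into natural numbers whose proportions converge to
prescribed positive weights `p` of total mass one. -/
lemma exists_nat_split {ι : Type*} [Fintype ι] [Nonempty ι] (p : ι → ℝ) (hp : ∀ i, 0 < p i)
    (hp1 : ∑ i, p i = 1) :
    ∃ β : ι → ℕ → ℕ, (∀ t, ∑ i, β i t = t) ∧
      ∀ i, Tendsto (fun t : ℕ => (β i t : ℝ) / t) atTop (𝓝 (p i)) := by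
  classical
  obtain ⟨i₀⟩ := ‹Nonempty ι›
  have hfl : ∀ i, Tendsto (fun t : ℕ => ((⌊p i * t⌋₊ : ℕ) : ℝ) / t) atTop (𝓝 (p i)) := fun i =>
    (tendsto_nat_floor_mul_div_atTop (hp i).le).comp tendsto_natCast_atTop_atTop
  have hsum : p i₀ + ∑ i ∈ Finset.univ.erase i₀, p i = 1 := by
    rw [Finset.add_sum_erase _ _ (Finset.mem_univ i₀), hp1]
  -- The rounded parts do not exceed `t`, so the truncated subtraction defining the last part
  -- is an honest one.
  have hle : ∀ t : ℕ, ∑ i ∈ Finset.univ.erase i₀, ⌊p i * t⌋₊ ≤ t := by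
    intro t
    have h : ∑ i ∈ Finset.univ.erase i₀, ((⌊p i * t⌋₊ : ℕ) : ℝ) ≤ t := by
      calc ∑ i ∈ Finset.univ.erase i₀, ((⌊p i * t⌋₊ : ℕ) : ℝ)
          ≤ ∑ i ∈ Finset.univ.erase i₀, p i * t :=
            Finset.sum_le_sum fun i _ => Nat.floor_le (by have := hp i; positivity)
        _ = (∑ i ∈ Finset.univ.erase i₀, p i) * t := by rw [Finset.sum_mul]
        _ ≤ 1 * t := by
            gcongr
            linarith [hp i₀]
        _ = t := one_mul _
    exact_mod_cast h
  refine ⟨fun i t => if i = i₀ then t - ∑ i ∈ Finset.univ.erase i₀, ⌊p i * t⌋₊ else ⌊p i * t⌋₊,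
    fun t => ?_, fun i => ?_⟩
  · rw [← Finset.add_sum_erase _ _ (Finset.mem_univ i₀)]
    beta_reduce
    rw [if_pos rfl,
      Finset.sum_congr rfl fun i hi => if_neg (Finset.ne_of_mem_erase hi)]
    exact Nat.sub_add_cancel (hle t)
  · by_cases hi : i = i₀
    · subst hi
      simp only [if_true]
      have h : Tendsto (fun t : ℕ => 1 - ∑ j ∈ Finset.univ.erase i, ((⌊p j * t⌋₊ : ℕ) : ℝ) / t)
          atTop (𝓝 (1 - ∑ j ∈ Finset.univ.erase i, p j)) :=
        tendsto_const_nhds.sub (tendsto_finsetSum _ fun j _ => hfl j)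
      rw [show 1 - ∑ j ∈ Finset.univ.erase i, p j = p i by linarith] at h
      refine h.congr' ?_
      filter_upwards [eventually_gt_atTop 0] with t ht
      have ht' : (t : ℝ) ≠ 0 := by positivity
      rw [Nat.cast_sub (hle t), sub_div, div_self ht', Nat.cast_sum, Finset.sum_div]
    · simpa only [if_neg hi] using hfl i

/-- A single block: if all weights `m j` divide `M`, the value `M * t` is represented exactly, with
coefficients asymptotically proportional to `r`. -/
lemma exists_block_solution {ι : Type*} [Fintype ι] [Nonempty ι] (m : ι → ℕ) (hm : ∀ i, 0 < m i)
    (M : ℕ) (hM : 0 < M) (hdvd : ∀ i, m i ∣ M) (r : ι → ℝ) (hr : ∀ i, 0 < r i) :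
    ∃ α : ι → ℕ → ℕ, (∀ t, ∑ i, m i * α i t = M * t) ∧
      ∃ C : ℝ, 0 < C ∧ ∀ i, Tendsto (fun t : ℕ => (α i t : ℝ) / t) atTop (𝓝 (C * r i)) := by
  have hmR : ∀ i, (0 : ℝ) < m i := fun i => by exact_mod_cast hm i
  have hS : 0 < ∑ i, m i * r i :=
    Finset.sum_pos (fun i _ => mul_pos (hmR i) (hr i)) Finset.univ_nonempty
  set S := ∑ i, m i * r i with hSdef
  obtain ⟨β, hβ, hβlim⟩ := exists_nat_split (fun i => m i * r i / S)
    (fun i => div_pos (mul_pos (hmR i) (hr i)) hS)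
    (by rw [← Finset.sum_div, ← hSdef, div_self hS.ne'])
  refine ⟨fun i t => M / m i * β i t, fun t => ?_, M / S,
    div_pos (by exact_mod_cast hM) hS, fun i => ?_⟩
  · simp_rw [← mul_assoc, Nat.mul_div_cancel' (hdvd _)]
    rw [← Finset.mul_sum, hβ]
  · have h := (hβlim i).const_mul ((M : ℝ) / m i)
    have hne := (hmR i).ne'
    rw [show (M : ℝ) / m i * (m i * r i / S) = M / S * r i by field_simp] at h
    refine h.congr fun t => ?_
    rw [Nat.cast_mul, Nat.cast_div (hdvd i) hne, mul_div_assoc]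

/-- (The Diophantine adjustment used in the proofs of Lemmas 4.4
and 4.5 and of Theorem 1.10 of the paper.) Given finitely many blocks, each with
odd weights m^ℓ_j = 2n^ℓ_j + 1 and prescribed positive ratio targets r^ℓ_j, one can
find a common strictly increasing sequence of values N_k and positive integers
α^ℓ_{j,k} → ∞ with ∑_j (2n^ℓ_j+1) α^ℓ_{j,k} = N_k for all ℓ and k, and with
α^ℓ_{j,k}/α^ℓ_{j',k} → r^ℓ_j/r^ℓ_{j'}. -/
theorem diophantine_adjustment
    (L : ℕ) (hL : 1 ≤ L)
    (J : Fin L → ℕ) (hJ : ∀ ℓ, 1 ≤ J ℓ)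
    (n : (ℓ : Fin L) → Fin (J ℓ) → ℕ)
    (r : (ℓ : Fin L) → Fin (J ℓ) → ℝ) (hr : ∀ ℓ j, 0 < r ℓ j) :
    ∃ (N : ℕ → ℕ) (α : (ℓ : Fin L) → (j : Fin (J ℓ)) → ℕ → ℕ),
      StrictMono N ∧ (∀ k, 0 < N k) ∧
      (∀ ℓ j k, 1 ≤ α ℓ j k) ∧
      (∀ ℓ j, Tendsto (fun k => α ℓ j k) atTop atTop) ∧
      (∀ ℓ k, ∑ j, (2 * n ℓ j + 1) * α ℓ j k = N k) ∧
      (∀ ℓ j j', Tendsto (fun k => (α ℓ j k : ℝ) / (α ℓ j' k : ℝ))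
        atTop (nhds (r ℓ j / r ℓ j'))) := by
  have hne : ∀ ℓ, Nonempty (Fin (J ℓ)) := fun ℓ => ⟨⟨0, hJ ℓ⟩⟩
  obtain ⟨M, hM, hdvd⟩ : ∃ M : ℕ, 0 < M ∧ ∀ ℓ j, 2 * n ℓ j + 1 ∣ M :=
    ⟨∏ ℓ, ∏ j, (2 * n ℓ j + 1),
      Finset.prod_pos fun ℓ _ => Finset.prod_pos fun j _ => Nat.succ_pos _,
      fun ℓ j => (Finset.dvd_prod_of_mem (fun j => 2 * n ℓ j + 1) (Finset.mem_univ j)).trans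
        (Finset.dvd_prod_of_mem (fun ℓ => ∏ j, (2 * n ℓ j + 1)) (Finset.mem_univ ℓ))⟩
  choose α hsum C hC hlim using fun ℓ => exists_block_solution (fun j => 2 * n ℓ j + 1)
    (fun j => Nat.succ_pos _) M hM (hdvd ℓ) (r ℓ) (hr ℓ)
  have htop : ∀ ℓ j, Tendsto (α ℓ j) atTop atTop := by
    intro ℓ j
    rw [← tendsto_natCast_atTop_iff (R := ℝ)]
    refine ((hlim ℓ j).pos_mul_atTop (mul_pos (hC ℓ) (hr ℓ j))
      tendsto_natCast_atTop_atTop).congr' ?_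
    filter_upwards [eventually_gt_atTop 0] with t ht
    have ht' : (t : ℝ) ≠ 0 := by positivity
    exact div_mul_cancel₀ _ ht'
  have hev : ∀ᶠ t in atTop, ∀ ℓ j, 1 ≤ α ℓ j t :=
    eventually_all.2 fun ℓ => eventually_all.2 fun j => (htop ℓ j).eventually_ge_atTop 1
  obtain ⟨T, hT⟩ := eventually_atTop.1 hev
  have hshift : Tendsto (fun k => k + (T + 1)) atTop atTop := tendsto_add_atTop_nat (T + 1)
  refine ⟨fun k => M * (k + (T + 1)), fun ℓ j k => α ℓ j (k + (T + 1)), ?_, ?_, ?_, ?_, ?_, ?_⟩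
  · intro a b hab
    exact Nat.mul_lt_mul_of_pos_left (by omega) hM
  · exact fun k => Nat.mul_pos hM (by omega)
  · exact fun ℓ j k => hT _ (by omega) ℓ j
  · exact fun ℓ j => (htop ℓ j).comp hshift
  · exact fun ℓ k => hsum ℓ _
  · intro ℓ j j'
    have h := ((hlim ℓ j).div (hlim ℓ j') (mul_pos (hC ℓ) (hr ℓ j')).ne').comp hshift
    rw [mul_div_mul_left _ _ (hC ℓ).ne'] at h
    refine h.congr fun k => ?_
    have hk : ((k + (T + 1) : ℕ) : ℝ) ≠ 0 := by positivity
    exact div_div_div_cancel_right₀ hk _ _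
end

section
/- Let m ≥ 1 be an integer, n = (n_1,…,n_m) ∈ ℕ^m, c = ∑_{j=1}^m (2n_j+1), and s = (s_1,…,s_m) with s_j = (2n_j+1)/c. Let φ be a smooth Γ^m-periodic function on ℝ^{3m} such that: (i) −Δφ = λφ for some λ ∈ ℝ; (ii) the z-Fourier coefficients of φ vanish at every α ∈ ℤ^m unless α_j ≥ 1 for all j; and (iii) −Δ_jφ = (2n_j+1)·(−i ∂_{z_j}φ) for every j ∈ {1,…,m}. Then for every t ∈ ℝ and every q ∈ ℝ^{3m}, φ(T_t^s q) = e^{iλt/c} φ(q); in particular |φ(T_t^s q)| = |φ(q)| for all t and q. (The exact translation identity behind the illustration in Section 4.1 of the paper: for joint eigenfunctions of the harmonic oscillators Ω_j with eigenvalues 2n_j+1, the associated Quantum Limits are invariant under the flow of ρ_s^𝒥 with s_j = (2n_j+1)/∑_i(2n_i+1).) -/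
/-!
Summing the oscillator equations over `j` and comparing with `-Δφ = λφ` gives
`∑ j, (2 n_j + 1) (-i ∂_{z_j} φ) = λ φ`. After division by `c`, this says that the derivative of `φ`
along the direction `(0, 0, s)` is `(iλ/c) φ` (`fderiv_direction`). Hence `t ↦ φ (T_t^s q)` solves
the linear ODE `u' = (iλ/c) u`, and `exp (-iλt/c) u` is constant.
-/

open MeasureTheory Filter Real Topology

noncomputable section

/-- The box [0,2π)^m for the z-variables. -/
def zBox (m : ℕ) : Set (Fin m → ℝ) := Set.univ.pi fun _ => Set.Ico (0:ℝ) (2 * π)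

/-- The z-Fourier coefficient φ̂_α(x,y) of a Γ^m-periodic function φ. -/
def zFourier {m : ℕ} (φ : Pt m → ℂ) (α : Fin m → ℤ) (x y : Fin m → ℝ) : ℂ :=
  (1 / (2 * π : ℂ) ^ m) *
    ∫ z in zBox m, φ (x, y, z) * Complex.exp (-Complex.I * ∑ j, (α j : ℂ) * (z j : ℂ))

/-- The generator of the flow `T^s` acts on `φ` as multiplication by `iλ/c`. -/
lemma fderiv_direction {m : ℕ} (n : Fin m → ℕ) (c : ℝ)
    (s : Fin m → ℝ) (hs : ∀ j, s j = (2 * (n j : ℝ) + 1) / c)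
    (φ : Pt m → ℂ) (lam : ℝ)
    (heig : ∀ q, -Delta φ q = (lam : ℂ) * φ q)
    (hosc : ∀ j : Fin m, ∀ q,
      -DeltaJ j φ q = (2 * (n j : ℂ) + 1) * (-Complex.I * Zop j φ q)) (q : Pt m) :
    fderiv ℝ φ q (0, 0, s) = Complex.I * (lam / c : ℝ) * φ q := by
  have hdir : ((0, 0, s) : Pt m) = ∑ j, s j • eZ m j := by
    refine Prod.ext ?_ (Prod.ext ?_ ?_) <;> ext i <;>
      simp [eZ, Prod.fst_sum, Prod.snd_sum, Finset.sum_apply, Pi.single_apply]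
  have hsum : ∑ j, (2 * (n j : ℂ) + 1) * (-Complex.I * Zop j φ q) = lam * φ q := by
    rw [← heig q, Delta, ← Finset.sum_neg_distrib]
    exact Finset.sum_congr rfl fun j _ => (hosc j q).symm
  have hD : fderiv ℝ φ q (0, 0, s) =
      Complex.I / c * ∑ j, (2 * (n j : ℂ) + 1) * (-Complex.I * Zop j φ q) := by
    rw [hdir, map_sum, Finset.mul_sum]
    refine Finset.sum_congr rfl fun j _ => ?_
    rw [map_smul, hs j, Complex.real_smul, Zop]
    push_cast
    linear_combination ((2 * (n j : ℂ) + 1) / c * fderiv ℝ φ q (eZ m j)) * Complex.I_sq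
  rw [hD, hsum]
  push_cast
  ring

/-- (The exact translation identity behind the illustration of
Section 4.1 of the paper.) If φ is a joint eigenfunction of −Δ and of the harmonic
oscillators Ω_j with eigenvalues 2n_j + 1, supported on positive z-frequencies,
then φ transforms by a unimodular factor under the flow T^s with
s_j = (2n_j+1)/∑_i(2n_i+1); in particular |φ| is invariant under this flow. -/
theorem joint_eigenfunction_translation_identity
    (m : ℕ) (hm : 1 ≤ m) (n : Fin m → ℕ)
    (c : ℝ) (hc : c = ∑ j, (2 * (n j : ℝ) + 1))
    (s : Fin m → ℝ) (hs : ∀ j, s j = (2 * (n j : ℝ) + 1) / c)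
    (φ : Pt m → ℂ) (lam : ℝ)
    (hsmooth : ContDiff ℝ (⊤ : ℕ∞) φ) (hper : GPeriodic φ)
    (heig : ∀ q, -Delta φ q = (lam : ℂ) * φ q)
    (hsupp : ∀ α : Fin m → ℤ, ¬ (∀ j, 1 ≤ α j) →
      ∀ x y : Fin m → ℝ, zFourier φ α x y = 0)
    (hosc : ∀ j : Fin m, ∀ q,
      -DeltaJ j φ q = (2 * (n j : ℂ) + 1) * (-Complex.I * Zop j φ q)) :
    ∀ (t : ℝ) (q : Pt m),
      φ (Ttrans s t q) = Complex.exp (Complex.I * ((lam * t / c : ℝ) : ℂ)) * φ q ∧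
      ‖φ (Ttrans s t q)‖ = ‖φ q‖ := by
  intro t q
  have hφ : Differentiable ℝ φ := hsmooth.differentiable (by simp)
  have hdir := fderiv_direction n c s hs φ lam heig hosc
  have hT : ∀ τ : ℝ, Ttrans s τ q = q + τ • ((0, 0, s) : Pt m) := fun τ => by
    refine Prod.ext ?_ (Prod.ext ?_ ?_) <;> ext i <;> simp [Ttrans]
  have hline : ∀ τ : ℝ, HasDerivAt (fun τ => Ttrans s τ q) ((0, 0, s) : Pt m) τ := fun τ => by
    simp only [hT]
    simpa using ((hasDerivAt_id τ).smul_const ((0, 0, s) : Pt m)).const_add q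
  have hu : ∀ τ : ℝ, HasDerivAt (fun τ => φ (Ttrans s τ q))
      (Complex.I * (lam / c : ℝ) * φ (Ttrans s τ q)) τ := fun τ => by
    rw [← hdir (Ttrans s τ q)]
    exact (hφ (Ttrans s τ q)).hasFDerivAt.comp_hasDerivAt τ (hline τ)
  have he : ∀ τ : ℝ, HasDerivAt (fun τ : ℝ => Complex.exp (-(Complex.I * (lam / c : ℝ)) * τ))
      (Complex.exp (-(Complex.I * (lam / c : ℝ)) * τ) * (-(Complex.I * (lam / c : ℝ)))) τ :=
    fun τ => by
      simpa using ((Complex.ofRealCLM.hasDerivAt (x := τ)).const_mul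
        (-(Complex.I * (lam / c : ℝ)))).cexp
  have hg : ∀ τ : ℝ, HasDerivAt (fun τ : ℝ =>
      Complex.exp (-(Complex.I * (lam / c : ℝ)) * τ) * φ (Ttrans s τ q)) 0 τ := fun τ => by
    refine ((he τ).mul (hu τ)).congr_deriv ?_
    ring
  have hconst := is_const_of_deriv_eq_zero (fun τ => (hg τ).differentiableAt)
    (fun τ => (hg τ).deriv) t 0
  have hT0 : Ttrans s 0 q = q := by simp [hT]
  simp only [hT0, Complex.ofReal_zero, mul_zero, Complex.exp_zero, one_mul] at hconst
  have hmain : φ (Ttrans s t q) = Complex.exp (Complex.I * ((lam * t / c : ℝ) : ℂ)) * φ q := by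
    rw [← hconst, ← mul_assoc, ← Complex.exp_add]
    have h0 : Complex.I * ((lam * t / c : ℝ) : ℂ) + -(Complex.I * (lam / c : ℝ)) * t = 0 := by
      push_cast
      ring
    rw [h0, Complex.exp_zero, one_mul]
  refine ⟨hmain, ?_⟩
  rw [hmain, norm_mul, mul_comm Complex.I, Complex.norm_exp_ofReal_mul_I, one_mul]
end
end
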